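/- There exists a constant C > 0 such that for all integers k, l with k ≥ 3 and l/2 ≤ k ≤ 2l, the two-colour Ramsey number satisfies r(k, l) ≤ k^{-C·(log k)/(log log k)} · C(k+l, k), where C(k+l, k) is the binomial coefficient and log denotes the natural logarithm. -/

import Mathlib

/-- A monochromatic clique of size `k` in colour `i` for an edge-colouring `c` of `K_n`. -/
def monoClique {n q : ℕ} (c : Sym2 (Fin n) → Fin q) (i : Fin q) (k : ℕ) : Prop :=
  ∃ A : Finset (Fin n), A.card = k ∧ ∀ u ∈ A, ∀ v ∈ A, u ≠ v → c s(u, v) = i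

/-- The `q`-colour Ramsey number `r(k 0, …, k (q-1))`. -/
noncomputable def ramseyQ {q : ℕ} (k : Fin q → ℕ) : ℕ :=
  sInf {n : ℕ | ∀ c : Sym2 (Fin n) → Fin q, ∃ i : Fin q, monoClique c i (k i)}

/-- The two-colour Ramsey number `r(s, t)`. -/
noncomputable def ramsey2 (s t : ℕ) : ℕ := ramseyQ ![s, t]

/-- A history in the on-line Ramsey game: the previously presented edges with their colours. -/
abbrev History (q : ℕ) := List (Sym2 ℕ × Fin q)

/-- A Builder strategy is valid if it always presents a genuine new edge. -/
def validBuilder {q : ℕ} (B : History q → Sym2 ℕ) : Prop :=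
  ∀ h : History q, ¬ (B h).IsDiag ∧ B h ∉ h.map Prod.fst

/-- The play determined by a Builder strategy `B` and a Painter strategy `P`:
`play B P n` is the history after `n` rounds. -/
def play {q : ℕ} (B : History q → Sym2 ℕ) (P : History q → Sym2 ℕ → Fin q) : ℕ → History q
  | 0 => []
  | n + 1 =>
      let h := play B P n
      h ++ [(B h, P h (B h))]

/-- The graph formed by the edges of colour `i` in a history. -/
def colourGraph {q : ℕ} (h : History q) (i : Fin q) : SimpleGraph ℕ :=
  SimpleGraph.fromEdgeSet {e | (e, i) ∈ h}

/-- `H` contains a copy of `G` as a subgraph. -/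
def containsCopy {V : Type*} (G : SimpleGraph V) (H : SimpleGraph ℕ) : Prop :=
  ∃ f : V → ℕ, Function.Injective f ∧ ∀ u v, G.Adj u v → H.Adj (f u) (f v)

/-- The `q`-colour on-line Ramsey number of `G`: the least `N` such that Builder has a
valid strategy forcing, against every Painter strategy, a monochromatic copy of `G`
within at most `N` rounds. -/
noncomputable def onlineRamsey {V : Type*} (q : ℕ) (G : SimpleGraph V) : ℕ :=
  sInf {N : ℕ | ∃ B : History q → Sym2 ℕ, validBuilder B ∧
    ∀ P : History q → Sym2 ℕ → Fin q,
      ∃ n ≤ N, ∃ i : Fin q, containsCopy G (colourGraph (play B P n) i)}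

/-!
The argument improves the Erdős–Szekeres bound `r(k, l) ≤ C(k + l, k)` by means of a book, that is,
a monochromatic clique (the spine) completely joined in its colour to a set of pages. Suppose that
there are no large cliques, and put `p = k / (k + l)`. The Erdős–Szekeres bound for the pages of a
book with spine of size `t` is about `p ^ t * exp (-t² / k) * C(k + l, k)`, so a book that keeps a
proportion of about `p ^ t` of all vertices as pages improves the bound by `exp (-t² / k)`.

Large books exist when every vertex has degree density about `p i` in each colour `i`. For sets
`A i u` of neighbours of `u` in colour `i`, the centred codegrees form positive semidefinite
kernels, and the Hadamard powers of such kernels are again positive semidefinite. Hence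
`x * (2 + f y) + y * (2 + f x)` has nonnegative average over pairs of vertices when `f` has
nonnegative Taylor coefficients, and choosing `f` bounded on the negative half-line forces some
vertex `u` either to have many `v` with no codegree much below its mean, or to have very many `v`
with some codegree well above its mean. In the first case `u` joins a spine, in the second the
density of a colour increases, which cannot happen often.

Finally, with `k` of order `a ^ 10` and spines of size `a ^ 6`, a colouring that avoids the cliques
and is not tiny must have a vertex whose degree in some colour exceeds its expected proportion by a
factor `1 + a⁻⁵`. Passing to its neighbourhood `a ^ 6` times gains a factor `2 ^ a`, which is
`exp (c * k ^ (1 / 10))` and therefore more than the required power of `k`.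
-/

section Kernels

open Finset Matrix

variable {V W : Type*}

theorem sum_sum_nonneg_of_posSemidef {A : Matrix V V ℝ} (hA : A.PosSemidef) (X : Finset V) :
    0 ≤ ∑ u ∈ X, ∑ v ∈ X, A u v := by
  have h := (hA.submatrix ((↑) : X → V)).dotProduct_mulVec_nonneg 1
  simpa [dotProduct, mulVec, ← Finset.sum_coe_sort X] using h

theorem posSemidef_map_pow [Finite V] {A : Matrix V V ℝ} (hA : A.PosSemidef) (n : ℕ) :
    (A.map (· ^ n)).PosSemidef := by
  induction n with
  | zero =>
    convert posSemidef_vecMulVec_self_star (1 : V → ℝ) using 1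
    ext u v
    simp [vecMulVec_apply]
  | succ n ih =>
    have hsucc : A.map (· ^ (n + 1)) = A.map (· ^ n) ⊙ A := by
      ext u v
      simp only [map_apply, hadamard_apply, pow_succ]
    exact hsucc ▸ ih.hadamard hA

/-- The entire function `∑ xⁿ / (2 * n)!`, which is `cosh √x` for `x ≥ 0` and `cos √(-x)` for
`x ≤ 0`. It has nonnegative Taylor coefficients, yet it is bounded on the negative half-line. -/
noncomputable def coshSqrt (x : ℝ) : ℝ :=
  if 0 ≤ x then Real.cosh √x else Real.cos √(-x)

theorem hasSum_coshSqrt (x : ℝ) :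
    HasSum (fun n : ℕ => x ^ n / (2 * n).factorial) (coshSqrt x) := by
  unfold coshSqrt
  split_ifs with h
  · simpa only [pow_mul, Real.sq_sqrt h] using Real.hasSum_cosh √x
  · have hcos := Real.hasSum_cos √(-x)
    simp only [pow_mul, Real.sq_sqrt (show 0 ≤ -x by linarith)] at hcos
    simpa only [← mul_pow, neg_one_mul, neg_neg] using hcos

theorem coshSqrt_le_one {x : ℝ} (hx : x ≤ 0) : coshSqrt x ≤ 1 := by
  unfold coshSqrt
  split_ifs with h
  · simp [le_antisymm hx h]
  · exact Real.cos_le_one _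

theorem neg_one_le_coshSqrt (x : ℝ) : -1 ≤ coshSqrt x := by
  unfold coshSqrt
  split_ifs
  · linarith [Real.cosh_pos √x]
  · exact Real.neg_one_le_cos _

theorem one_add_half_le_coshSqrt {x : ℝ} (hx : 0 ≤ x) : 1 + x / 2 ≤ coshSqrt x := by
  have h := sum_le_hasSum (Finset.range 2) (fun n _ => by positivity) (hasSum_coshSqrt x)
  simpa [Finset.sum_range_succ] using h

theorem coshSqrt_le_exp_sqrt {x M : ℝ} (hx : x ≤ M) : coshSqrt x ≤ Real.exp √M := by
  rcases le_or_gt x 0 with h | h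
  · exact (coshSqrt_le_one h).trans (Real.one_le_exp (Real.sqrt_nonneg M))
  · have hexp : Real.exp (-√x) ≤ Real.exp √x :=
      Real.exp_le_exp.2 (neg_le_self (Real.sqrt_nonneg x))
    calc coshSqrt x = (Real.exp √x + Real.exp (-√x)) / 2 := by
          rw [coshSqrt, if_pos h.le, Real.cosh_eq]
      _ ≤ Real.exp √x := by linarith
      _ ≤ Real.exp √M := Real.exp_le_exp.2 (Real.sqrt_le_sqrt hx)

/-- A test function for pairs of kernels: its average over positive semidefinite kernels is
nonnegative, while it is at most `-1` as soon as one of its arguments is very negative. -/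
noncomputable def pairWeight (x y : ℝ) : ℝ := x * (2 + coshSqrt y) + y * (2 + coshSqrt x)

/-- An upper bound for `pairWeight x y` when `x, y ≤ M`. -/
noncomputable def pairWeightBound (M : ℝ) : ℝ := 2 * M * (2 + Real.exp √M)

theorem one_le_pairWeightBound {M : ℝ} (hM : 1 ≤ M) : 1 ≤ pairWeightBound M := by
  unfold pairWeightBound
  nlinarith [Real.exp_pos √M]

theorem pairWeightBound_le {M y : ℝ} (hy : 0 ≤ y) (h : M ≤ y ^ 2) :
    pairWeightBound M ≤ 6 * y ^ 2 * Real.exp y := by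
  have hexp : Real.exp √M ≤ Real.exp y := Real.exp_le_exp.2 (Real.sqrt_le_iff.2 ⟨hy, h⟩)
  have hone : 1 ≤ Real.exp y := Real.one_le_exp hy
  calc pairWeightBound M ≤ 2 * y ^ 2 * (2 + Real.exp y) := by unfold pairWeightBound; gcongr
    _ ≤ 2 * y ^ 2 * (3 * Real.exp y) := by gcongr; linarith
    _ = 6 * y ^ 2 * Real.exp y := by ring

theorem pairWeight_comm (x y : ℝ) : pairWeight x y = pairWeight y x :=
  add_comm _ _

theorem pairWeight_le {x y M : ℝ} (hM : 0 ≤ M) (hx : x ≤ M) (hy : y ≤ M) :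
    pairWeight x y ≤ pairWeightBound M := by
  have half_le {x y : ℝ} (hx : x ≤ M) (hy : y ≤ M) :
      x * (2 + coshSqrt y) ≤ M * (2 + Real.exp √M) :=
    mul_le_mul hx (by linarith [coshSqrt_le_exp_sqrt hy]) (by linarith [neg_one_le_coshSqrt y]) hM
  unfold pairWeight pairWeightBound
  linarith [half_le hx hy, half_le hy hx]

theorem pairWeight_le_neg_one {x y : ℝ} (hx : x ≤ -6) : pairWeight x y ≤ -1 := by
  have hle := coshSqrt_le_one (show x ≤ 0 by linarith)
  have hge := neg_one_le_coshSqrt x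
  unfold pairWeight
  rcases le_or_gt 0 y with h | h
  · nlinarith [one_add_half_le_coshSqrt h]
  · nlinarith [neg_one_le_coshSqrt y]

theorem sum_mul_coshSqrt_nonneg [Finite V] {A B : Matrix V V ℝ} (hA : A.PosSemidef)
    (hB : B.PosSemidef) (X : Finset V) : 0 ≤ ∑ u ∈ X, ∑ v ∈ X, A u v * coshSqrt (B u v) := by
  have hsum : HasSum (fun n : ℕ => ∑ u ∈ X, ∑ v ∈ X, A u v * (B u v ^ n / (2 * n).factorial))
      (∑ u ∈ X, ∑ v ∈ X, A u v * coshSqrt (B u v)) :=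
    hasSum_sum fun u _ => hasSum_sum fun v _ => (hasSum_coshSqrt _).mul_left _
  refine hsum.nonneg fun n => ?_
  have hterm := div_nonneg
    (sum_sum_nonneg_of_posSemidef (hA.hadamard (posSemidef_map_pow hB n)) X)
    (Nat.cast_nonneg (α := ℝ) (2 * n).factorial)
  simpa only [hadamard_apply, map_apply, Finset.sum_div, mul_div_assoc] using hterm

theorem sum_pairWeight_nonneg [Finite V] {A B : Matrix V V ℝ} (hA : A.PosSemidef)
    (hB : B.PosSemidef) (X : Finset V) : 0 ≤ ∑ u ∈ X, ∑ v ∈ X, pairWeight (A u v) (B u v) := by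
  have hA₁ := sum_sum_nonneg_of_posSemidef hA X
  have hB₁ := sum_sum_nonneg_of_posSemidef hB X
  have hAB := sum_mul_coshSqrt_nonneg hA hB X
  have hBA := sum_mul_coshSqrt_nonneg hB hA X
  simp only [pairWeight, mul_add, Finset.sum_add_distrib, ← Finset.sum_mul]
  linarith

theorem pairWeight_le_indicator {x : Fin 2 → ℝ} {Λ M : ℝ} (hΛ : 1 ≤ Λ) (hΛM : Λ ≤ M)
    (hx : ∀ i, x i ≤ M) :
    pairWeight (x 0) (x 1) ≤ -1 + (1 + pairWeightBound Λ) * (if ∀ i, -6 ≤ x i then 1 else 0)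
      + (1 + pairWeightBound M) * (if Λ ≤ x 0 then 1 else 0)
      + (1 + pairWeightBound M) * (if Λ ≤ x 1 then 1 else 0) := by
  have hFΛ := one_le_pairWeightBound hΛ
  have hFM := one_le_pairWeightBound (hΛ.trans hΛM)
  have hM := pairWeight_le (by linarith) (hx 0) (hx 1)
  by_cases h₀ : Λ ≤ x 0
  · rw [if_pos h₀]
    split_ifs <;> linarith
  by_cases h₁ : Λ ≤ x 1
  · rw [if_pos h₁]
    split_ifs <;> linarith
  rw [if_neg h₀, if_neg h₁]
  split_ifs with hgood
  · linarith [pairWeight_le (by linarith) (not_le.1 h₀).le (not_le.1 h₁).le]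
  · rw [Fin.forall_fin_two, not_and_or, not_le, not_le] at hgood
    rcases hgood with h | h
    · linarith [pairWeight_le_neg_one (y := x 1) h.le]
    · linarith [pairWeight_comm (x 0) (x 1), pairWeight_le_neg_one (y := x 0) h.le]

theorem exists_row_of_posSemidef [Finite V] {K : Fin 2 → Matrix V V ℝ} (hK : ∀ i, (K i).PosSemidef)
    {X : Finset V} (hX : X.Nonempty) {Λ M : ℝ} (hΛ : 1 ≤ Λ) (hΛM : Λ ≤ M)
    (hKM : ∀ i, ∀ u ∈ X, ∀ v ∈ X, K i u v ≤ M) :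
    (∃ u ∈ X, (#X : ℝ) ≤ 8 * pairWeightBound Λ * #{v ∈ X | ∀ i, -6 ≤ K i u v}) ∨
      ∃ i, ∃ u ∈ X, (#X : ℝ) ≤ 8 * pairWeightBound M * #{v ∈ X | Λ ≤ K i u v} := by
  by_contra! ⟨hgood, hlarge⟩
  have hFΛ := one_le_pairWeightBound hΛ
  have hFM := one_le_pairWeightBound (hΛ.trans hΛM)
  have hrow : ∀ u ∈ X, ∑ v ∈ X, pairWeight (K 0 u v) (K 1 u v) < 0 := by
    intro u hu
    have hle := Finset.sum_le_sum fun v hv =>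
      pairWeight_le_indicator (x := fun i => K i u v) hΛ hΛM fun i => hKM i u hu v hv
    simp only [Finset.sum_add_distrib, ← Finset.mul_sum, Finset.sum_boole,
      Finset.sum_const, nsmul_eq_mul] at hle
    have scale {F x : ℝ} (hF : 1 ≤ F) (hx : 0 ≤ x) (h : 8 * F * x < #X) :
        (1 + F) * x < #X / 4 := by nlinarith
    linarith [scale hFΛ (Nat.cast_nonneg _) (hgood u hu),
      scale hFM (Nat.cast_nonneg _) (hlarge 0 u hu), scale hFM (Nat.cast_nonneg _) (hlarge 1 u hu)]
  have hneg := Finset.sum_lt_sum_of_nonempty hX hrow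
  rw [Finset.sum_const_zero] at hneg
  exact hneg.not_ge (sum_pairWeight_nonneg (hK 0) (hK 1) X)

section Codegree

variable [DecidableEq W]

/-- The Gram matrix on `Y` of the functions obtained from the indicators of the sets `A u` by
subtracting `p`. -/
noncomputable def codegreeKernel (A : V → Finset W) (Y : Finset W) (p : ℝ) : Matrix V V ℝ :=
  ∑ y ∈ Y, vecMulVec (fun u => (if y ∈ A u then 1 else 0) - p)
    (star fun u => (if y ∈ A u then 1 else 0) - p)

theorem posSemidef_codegreeKernel [Finite V] (A : V → Finset W) (Y : Finset W) (p : ℝ) :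
    (codegreeKernel A Y p).PosSemidef :=
  posSemidef_sum Y fun _ _ => posSemidef_vecMulVec_self_star _

theorem codegreeKernel_apply {A : V → Finset W} {Y : Finset W} {d : ℕ} {u v : V}
    (hY : Y.Nonempty) (hu : A u ⊆ Y) (hv : A v ⊆ Y) (hdu : #(A u) = d) (hdv : #(A v) = d) :
    codegreeKernel A Y (d / #Y) u v = #(A u ∩ A v) - d / #Y * d := by
  have hY₀ : (#Y : ℝ) ≠ 0 := Nat.cast_ne_zero.2 hY.card_ne_zero
  have hexpand : ∀ y, ((if y ∈ A u then (1 : ℝ) else 0) - d / #Y) *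
      ((if y ∈ A v then (1 : ℝ) else 0) - d / #Y) =
      (if y ∈ A u ∩ A v then 1 else 0) - d / #Y * (if y ∈ A u then 1 else 0)
        - d / #Y * (if y ∈ A v then 1 else 0) + (d / #Y) ^ 2 := by
    intro y
    by_cases h₁ : y ∈ A u <;> by_cases h₂ : y ∈ A v <;> simp [h₁, h₂] <;> ring
  simp only [codegreeKernel, Matrix.sum_apply, vecMulVec_apply, star_trivial,
    hexpand, Finset.sum_add_distrib, Finset.sum_sub_distrib, ← Finset.mul_sum, Finset.sum_boole,
    Finset.sum_const, nsmul_eq_mul, Finset.filter_mem_eq_inter, Finset.inter_eq_right.2 hu,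
    Finset.inter_eq_right.2 hv, Finset.inter_eq_right.2 (Finset.inter_subset_left.trans hu),
    hdu, hdv]
  field_simp
  ring

theorem le_inv_smul_codegreeKernel_iff {A : V → Finset W} {Y : Finset W} {d : ℕ} {u v : V}
    (hY : Y.Nonempty) (hu : A u ⊆ Y) (hv : A v ⊆ Y) (hdu : #(A u) = d) (hdv : #(A v) = d)
    {α : ℝ} (hα : 0 < α) (hd : 0 < d) (x : ℝ) :
    x ≤ ((α * d)⁻¹ • codegreeKernel A Y (d / #Y)) u v ↔
      ((d : ℝ) / #Y + x * α) * d ≤ #(A u ∩ A v) := by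
  have hαd : 0 < α * d := mul_pos hα (Nat.cast_pos.2 hd)
  rw [Matrix.smul_apply, smul_eq_mul, inv_mul_eq_div, codegreeKernel_apply hY hu hv hdu hdv,
    le_div_iff₀ hαd, le_sub_iff_add_le', add_mul, mul_assoc x]

theorem inv_smul_codegreeKernel_le {A : V → Finset W} {Y : Finset W} {d : ℕ} {u v : V}
    (hY : Y.Nonempty) (hu : A u ⊆ Y) (hv : A v ⊆ Y) (hdu : #(A u) = d) (hdv : #(A v) = d)
    {α : ℝ} (hα : 0 < α) (hd : 0 < d) :
    ((α * d)⁻¹ • codegreeKernel A Y (d / #Y)) u v ≤ 1 / α := by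
  have hd₀ : (0 : ℝ) < d := Nat.cast_pos.2 hd
  have hcodeg : (#(A u ∩ A v) : ℝ) ≤ d := by
    exact_mod_cast (Finset.card_le_card Finset.inter_subset_left).trans_eq hdu
  rw [Matrix.smul_apply, smul_eq_mul, inv_mul_eq_div, codegreeKernel_apply hY hu hv hdu hdv]
  calc ((#(A u ∩ A v) : ℝ) - d / #Y * d) / (α * d) ≤ d / (α * d) := by
        gcongr
        exact (sub_le_self _ (by positivity)).trans hcodeg
    _ = 1 / α := by rw [mul_comm, div_mul_cancel_left₀ hd₀.ne', one_div]

theorem exists_row_codegree [Finite V] {X : Finset V} (hX : X.Nonempty) {Y : Fin 2 → Finset W}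
    {A : Fin 2 → V → Finset W} {d : Fin 2 → ℕ} (hd : ∀ i, 0 < d i)
    (hAY : ∀ i, ∀ u ∈ X, A i u ⊆ Y i) (hAd : ∀ i, ∀ u ∈ X, #(A i u) = d i)
    {α : Fin 2 → ℝ} (hα : ∀ i, 0 < α i) {Λ M : ℝ} (hΛ : 1 ≤ Λ) (hΛM : Λ ≤ M)
    (hM : ∀ i, 1 / α i ≤ M) :
    (∃ u ∈ X, (#X : ℝ) ≤ 8 * pairWeightBound Λ *
      #{v ∈ X | ∀ i, ((d i : ℝ) / #(Y i) - 6 * α i) * d i ≤ #(A i u ∩ A i v)}) ∨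
    ∃ i, ∃ u ∈ X, (#X : ℝ) ≤ 8 * pairWeightBound M *
      #{v ∈ X | ((d i : ℝ) / #(Y i) + Λ * α i) * d i ≤ #(A i u ∩ A i v)} := by
  set K : Fin 2 → Matrix V V ℝ :=
    fun i => (α i * d i)⁻¹ • codegreeKernel (A i) (Y i) (d i / #(Y i))
  have hK : ∀ i, (K i).PosSemidef := fun i =>
    (posSemidef_codegreeKernel _ _ _).smul (inv_nonneg.2 (mul_nonneg (hα i).le (Nat.cast_nonneg _)))
  have hY : ∀ i, (Y i).Nonempty := fun i => by
    obtain ⟨u, hu⟩ := hX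
    exact (Finset.card_pos.1 (hAd i u hu ▸ hd i)).mono (hAY i u hu)
  have hKM : ∀ i, ∀ u ∈ X, ∀ v ∈ X, K i u v ≤ M := fun i u hu v hv =>
    (inv_smul_codegreeKernel_le (hY i) (hAY i u hu) (hAY i v hv) (hAd i u hu) (hAd i v hv)
      (hα i) (hd i)).trans (hM i)
  have hcodeg : ∀ i, ∀ u ∈ X, ∀ v ∈ X, ∀ x,
      x ≤ K i u v ↔ ((d i : ℝ) / #(Y i) + x * α i) * d i ≤ #(A i u ∩ A i v) :=
    fun i u hu v hv => le_inv_smul_codegreeKernel_iff (hY i) (hAY i u hu) (hAY i v hv)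
      (hAd i u hu) (hAd i v hv) (hα i) (hd i)
  rcases exists_row_of_posSemidef hK hX hΛ hΛM hKM with ⟨u, hu, h⟩ | ⟨i, u, hu, h⟩
  · rw [Finset.filter_congr fun v hv => forall_congr' fun i => hcodeg i u hu v hv _] at h
    simp only [neg_mul, ← sub_eq_add_neg] at h
    exact Or.inl ⟨u, hu, h⟩
  · rw [Finset.filter_congr fun v hv => hcodeg i u hu v hv _] at h
    exact Or.inr ⟨i, u, hu, h⟩

end Codegree

end Kernels

section Books

open Finset

variable {V κ : Type*}

/-- All pairs of distinct vertices of `T` have colour `i`. -/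
def IsMonoClique (c : Sym2 V → κ) (i : κ) (T : Finset V) : Prop :=
  (T : Set V).Pairwise fun u v => c s(u, v) = i

theorem isMonoClique_empty (c : Sym2 V → κ) (i : κ) : IsMonoClique c i ∅ := by
  simp [IsMonoClique]

/-- The pair `(T, M)` is a book of colour `i`: the spine `T` is a clique, and it is completely
joined to the set `M` of pages. -/
structure IsMonoBook (c : Sym2 V → κ) (i : κ) (T M : Finset V) : Prop where
  spine : IsMonoClique c i T
  pages : ∀ u ∈ T, ∀ v ∈ M, u ≠ v ∧ c s(u, v) = i

/-- For some colour `i` there is a book of colour `i` with `r i` vertices in its spine and so many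
pages in `Y i` as remain if the set of pages shrinks `r i + s i` times by the factor `b i`. -/
def HasLargeBook (c : Sym2 V → κ) (b : κ → ℝ) (r s : κ → ℕ) (X : Finset V) (Y : κ → Finset V) :
    Prop :=
  ∃ i, ∃ T ⊆ X, ∃ M ⊆ Y i, #T = r i ∧ IsMonoBook c i T M ∧ b i ^ (r i + s i) * #(Y i) ≤ #M

theorem exists_eq_add_single [DecidableEq κ] {f : κ → ℕ} {i : κ} {n : ℕ} (h : n ≤ f i) :
    ∃ g : κ → ℕ, f = g + Pi.single i n := by
  refine ⟨Function.update f i (f i - n), funext fun j => ?_⟩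
  rcases eq_or_ne j i with rfl | hji
  · simp [Nat.sub_add_cancel h]
  · simp [hji]

theorem sum_add_single [Fintype κ] [DecidableEq κ] (f : κ → ℕ) (i : κ) :
    ∑ j, (f + Pi.single i 1 : κ → ℕ) j = ∑ j, f j + 1 := by
  simp [sum_add_distrib]

section HasLargeBook

variable {c : Sym2 V → κ} {b : κ → ℝ} {r s : κ → ℕ} {X X₁ : Finset V} {Y : κ → Finset V} {i : κ}
  {Z : Finset V}

theorem hasLargeBook_of_eq_zero (hr : r i = 0) (hb₀ : 0 ≤ b i) (hb₁ : b i ≤ 1) :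
    HasLargeBook c b r s X Y := by
  refine ⟨i, ∅, empty_subset _, Y i, Subset.rfl, by rw [card_empty, hr],
    ⟨isMonoClique_empty c i, by simp⟩, ?_⟩
  exact mul_le_of_le_one_left (Nat.cast_nonneg _) (pow_le_one₀ hb₀ hb₁)

theorem HasLargeBook.of_boost_step [DecidableEq κ]
    (h : HasLargeBook c b r s X₁ (Function.update Y i Z)) (hb : 0 ≤ b i)
    (hX₁ : X₁ ⊆ X) (hZ : Z ⊆ Y i) (hcard : b i * #(Y i) ≤ #Z) :
    HasLargeBook c b r (s + Pi.single i 1) X Y := by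
  obtain ⟨j, T, hT, M, hM, hTr, hbook, hle⟩ := h
  rcases eq_or_ne j i with rfl | hji
  · rw [Function.update_self] at hM hle
    refine ⟨j, T, hT.trans hX₁, M, hM.trans hZ, hTr, hbook, ?_⟩
    calc b j ^ (r j + (s + Pi.single j 1 : κ → ℕ) j) * #(Y j)
        = b j ^ (r j + s j) * (b j * #(Y j)) := by
          rw [Pi.add_apply, Pi.single_eq_same]
          ring
      _ ≤ b j ^ (r j + s j) * #Z := by gcongr
      _ ≤ #M := hle
  · rw [Function.update_of_ne hji] at hM hle
    exact ⟨j, T, hT.trans hX₁, M, hM, hTr, hbook, by simpa [hji] using hle⟩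

end HasLargeBook

variable [DecidableEq V]

theorem IsMonoClique.insert {c : Sym2 V → κ} {i : κ} {u : V} {T : Finset V}
    (h : IsMonoClique c i T) (hu : ∀ v ∈ T, c s(u, v) = i) : IsMonoClique c i (insert u T) := by
  unfold IsMonoClique
  rw [coe_insert]
  exact Set.Pairwise.insert h fun v hv _ => ⟨hu v hv, Sym2.eq_swap ▸ hu v hv⟩

variable [DecidableEq κ]

/-- The vertices of `Y` joined to `x` in colour `i`. -/
def colourNbhd (c : Sym2 V → κ) (i : κ) (x : V) (Y : Finset V) : Finset V :=
  {y ∈ Y | x ≠ y ∧ c s(x, y) = i}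

theorem mem_colourNbhd {c : Sym2 V → κ} {i : κ} {x y : V} {Y : Finset V} :
    y ∈ colourNbhd c i x Y ↔ y ∈ Y ∧ x ≠ y ∧ c s(x, y) = i :=
  mem_filter

theorem colourNbhd_subset (c : Sym2 V → κ) (i : κ) (x : V) (Y : Finset V) :
    colourNbhd c i x Y ⊆ Y :=
  filter_subset _ _

theorem colourNbhd_mono {c : Sym2 V → κ} {i : κ} {x : V} {Y Z : Finset V} (h : Y ⊆ Z) :
    colourNbhd c i x Y ⊆ colourNbhd c i x Z :=
  filter_subset_filter _ h

theorem card_colourNbhd_add_card_colourNbhd (c : Sym2 V → Fin 2) (x : V) (Y : Finset V) :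
    #(colourNbhd c 0 x Y) + #(colourNbhd c 1 x Y) = #(Y.erase x) := by
  have h := card_eq_sum_card_fiberwise (f := fun y => c s(x, y)) (s := Y.erase x)
    (t := univ) fun _ _ => by simp
  rw [Fin.sum_univ_two] at h
  rw [h]
  congr 2 <;> ext y <;> simp only [mem_colourNbhd, mem_filter, mem_erase] <;> tauto

theorem card_le_card_colourNbhd_add (c : Sym2 V → Fin 2) (x : V) (Y : Finset V) :
    #Y ≤ #(colourNbhd c 0 x Y) + #(colourNbhd c 1 x Y) + 1 := by
  rw [card_colourNbhd_add_card_colourNbhd]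
  exact Nat.sub_le_iff_le_add.1 pred_card_le_card_erase

theorem exists_card_le_four_mul_card_colourNbhd (c : Sym2 V → Fin 2) (x : V) {Y : Finset V}
    (hY : 2 ≤ #Y) : ∃ i, #Y ≤ 4 * #(colourNbhd c i x Y) := by
  by_contra! h
  have h₀ := h 0
  have h₁ := h 1
  have := card_le_card_colourNbhd_add c x Y
  lia

theorem IsMonoBook.insert {c : Sym2 V → κ} {i : κ} {u : V} {T M X Y : Finset V}
    (h : IsMonoBook c i T M) (hT : T ⊆ colourNbhd c i u X) (hM : M ⊆ colourNbhd c i u Y) :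
    IsMonoBook c i (insert u T) M where
  spine := h.spine.insert fun _ hv => (mem_colourNbhd.1 (hT hv)).2.2
  pages := forall_mem_insert .. |>.2 ⟨fun _ hv => (mem_colourNbhd.1 (hM hv)).2, h.pages⟩

theorem HasLargeBook.of_colour_step {c : Sym2 V → κ} {b : κ → ℝ} {r s : κ → ℕ} {X X₁ : Finset V}
    {Y : κ → Finset V} {i : κ} {Z : Finset V} {u : V}
    (h : HasLargeBook c b r s X₁ (Function.update Y i Z)) (hb : 0 ≤ b i) (hu : u ∈ X)
    (hX₁ : X₁ ⊆ colourNbhd c i u X) (hZ : Z ⊆ colourNbhd c i u (Y i))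
    (hcard : b i * #(Y i) ≤ #Z) : HasLargeBook c b (r + Pi.single i 1) s X Y := by
  obtain ⟨j, T, hT, M, hM, hTr, hbook, hle⟩ := h
  have hX₁X : X₁ ⊆ X := hX₁.trans (colourNbhd_subset ..)
  rcases eq_or_ne j i with rfl | hji
  · rw [Function.update_self] at hM hle
    have huT : u ∉ T := fun hmem => (mem_colourNbhd.1 (hX₁ (hT hmem))).2.1 rfl
    refine ⟨j, insert u T, insert_subset hu (hT.trans hX₁X), M,
      hM.trans (hZ.trans (colourNbhd_subset ..)), by simp [card_insert_of_notMem huT, hTr],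
      hbook.insert (hT.trans hX₁) (hM.trans hZ), ?_⟩
    calc b j ^ ((r + Pi.single j 1 : κ → ℕ) j + s j) * #(Y j)
        = b j ^ (r j + s j) * (b j * #(Y j)) := by
          rw [Pi.add_apply, Pi.single_eq_same]
          ring
      _ ≤ b j ^ (r j + s j) * #Z := by gcongr
      _ ≤ #M := hle
  · rw [Function.update_of_ne hji] at hM hle
    exact ⟨j, T, hT.trans hX₁X, M, hM, by simp [hTr, hji], hbook, by simpa [hji] using hle⟩

/-- A state of the book algorithm: spines are searched for in `X` and pages of colour `i` in `Y i`,
where every vertex of `X` has density at least `b i + q i` in colour `i`. Here `b i` is fixed once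
and for all, and the surplus `q i` varies. -/
structure IsDenseState (c : Sym2 V → κ) (b q : κ → ℝ) (X : Finset V) (Y : κ → Finset V) :
    Prop where
  nonempty : ∀ i, (Y i).Nonempty
  degree : ∀ i, ∀ x ∈ X, (b i + q i) * #(Y i) ≤ #(colourNbhd c i x (Y i))

/-- The set `Z` may replace `Y` as the set of pages of colour `i`: the vertex `u` is joined to it,
and the vertices of `X₁` have density at least `γ` in it. -/
structure IsPageRefinement (c : Sym2 V → κ) (i : κ) (u : V) (β γ : ℝ) (X₁ Y Z : Finset V) :
    Prop where
  subset : Z ⊆ colourNbhd c i u Y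
  nonempty : Z.Nonempty
  card_le : β * #Y ≤ #Z
  degree : ∀ x ∈ X₁, γ * #Z ≤ #(colourNbhd c i x Z)

theorem IsPageRefinement.mono {c : Sym2 V → κ} {i : κ} {u : V} {β γ : ℝ} {X₁ X₂ Y Z : Finset V}
    (h : IsPageRefinement c i u β γ X₂ Y Z) (hX : X₁ ⊆ X₂) : IsPageRefinement c i u β γ X₁ Y Z where
  subset := h.subset
  nonempty := h.nonempty
  card_le := h.card_le
  degree x hx := h.degree x (hX hx)

section IsDenseState

variable {c : Sym2 V → κ} {b q q' : κ → ℝ} {X X₁ : Finset V} {Y : κ → Finset V} {i : κ}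
  {Z : Finset V}

theorem IsDenseState.add_le_one (h : IsDenseState c b q X Y) (hX : X.Nonempty) (i : κ) :
    b i + q i ≤ 1 := by
  obtain ⟨x, hx⟩ := hX
  have hY : (0 : ℝ) < #(Y i) := Nat.cast_pos.2 (h.nonempty i).card_pos
  refine le_of_mul_le_mul_right ((h.degree i x hx).trans ?_) hY
  rw [one_mul]
  exact_mod_cast card_le_card (colourNbhd_subset ..)

theorem IsDenseState.update {u : V} {β γ : ℝ} (h : IsDenseState c b q X Y) (hX₁ : X₁ ⊆ X)
    (hZ : IsPageRefinement c i u β γ X₁ (Y i) Z) (hγ : γ = b i + q' i)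
    (hq' : ∀ j ≠ i, q' j = q j) : IsDenseState c b q' X₁ (Function.update Y i Z) where
  nonempty j := by
    rcases eq_or_ne j i with rfl | hji
    · simpa using hZ.nonempty
    · simpa [hji] using h.nonempty j
  degree j x hx := by
    rcases eq_or_ne j i with rfl | hji
    · simpa [← hγ] using hZ.degree x hx
    · simpa [hji, hq' j hji] using h.degree j x (hX₁ hx)

theorem IsDenseState.exists_trimmed (h : IsDenseState c b q X Y) (hbq : ∀ i, 0 < b i + q i) :
    ∃ (d : κ → ℕ) (A : κ → V → Finset V), ∀ i, 0 < d i ∧ (b i + q i) * #(Y i) ≤ d i ∧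
      ∀ u ∈ X, A i u ⊆ colourNbhd c i u (Y i) ∧ #(A i u) = d i := by
  have hsub : ∀ i u, ∃ A ⊆ colourNbhd c i u (Y i),
      u ∈ X → #A = ⌈(b i + q i) * #(Y i)⌉₊ := by
    intro i u
    by_cases hu : u ∈ X
    · obtain ⟨A, hA, hcard⟩ := exists_subset_card_eq (Nat.ceil_le.2 (h.degree i u hu))
      exact ⟨A, hA, fun _ => hcard⟩
    · exact ⟨∅, empty_subset _, fun hu' => absurd hu' hu⟩
  choose A hA hAcard using hsub
  exact ⟨_, A, fun i => ⟨Nat.ceil_pos.2 (mul_pos (hbq i) (Nat.cast_pos.2 (h.nonempty i).card_pos)),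
    Nat.le_ceil _, fun u hu => ⟨hA i u, hAcard i u hu⟩⟩⟩

theorem isPageRefinement_of_le_card_inter {A : V → Finset V} {d : ℕ} {β γ : ℝ} {Y : Finset V}
    {u : V} (hd : 0 < d) (hβ : β * #Y ≤ d)
    (hA : ∀ x ∈ X, A x ⊆ colourNbhd c i x Y ∧ #(A x) = d) (hu : u ∈ X) (hX₁ : X₁ ⊆ X)
    (hγ : ∀ x ∈ X₁, γ * d ≤ #(A u ∩ A x)) : IsPageRefinement c i u β γ X₁ Y (A u) where
  subset := (hA u hu).1
  nonempty := card_pos.1 ((hA u hu).2.symm ▸ hd)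
  card_le := by rwa [(hA u hu).2]
  degree x hx := by
    have hsub : A u ∩ A x ⊆ colourNbhd c i x (A u) := fun y hy =>
      mem_filter.2 ⟨mem_of_mem_inter_left hy,
        (mem_colourNbhd.1 ((hA x (hX₁ hx)).1 (mem_of_mem_inter_right hy))).2⟩
    rw [(hA u hu).2]
    exact (hγ x hx).trans (Nat.cast_le.2 (card_le_card hsub))

end IsDenseState

section TwoColours

variable {c : Sym2 V → Fin 2} {b q : Fin 2 → ℝ} {X : Finset V} {Y : Fin 2 → Finset V} {η D : ℝ}

theorem one_le_six_div (hη₀ : 0 < η) (hη₁ : η < 1) : 1 ≤ 6 / η :=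
  (one_le_div hη₀).2 (by linarith)

theorem IsDenseState.exists_isPageRefinement [Finite V] (h : IsDenseState c b q X Y)
    (hX : X.Nonempty) (hb : ∀ i, 0 ≤ b i) (hq : ∀ i, 0 < q i) (hη₀ : 0 < η) (hη₁ : η < 1)
    (hD : 1 ≤ D) (hqD : ∀ i, 1 ≤ q i * D) :
    (∃ u ∈ X, ∃ X₁ ⊆ X, (#X : ℝ) ≤ 8 * pairWeightBound (6 / η) * #X₁ ∧
      ∀ i, ∃ Z, IsPageRefinement c i u (b i) (b i + q i * (1 - η)) X₁ (Y i) Z) ∨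
    ∃ i, ∃ u ∈ X, ∃ X₁ ⊆ X, (#X : ℝ) ≤ 8 * pairWeightBound (6 / η * D) * #X₁ ∧
      ∃ Z, IsPageRefinement c i u (b i) (b i + q i * 2) X₁ (Y i) Z := by
  obtain ⟨d, A, hdA⟩ := h.exists_trimmed fun i => add_pos_of_nonneg_of_pos (hb i) (hq i)
  have hY : ∀ i, (0 : ℝ) < #(Y i) := fun i => Nat.cast_pos.2 (h.nonempty i).card_pos
  have hdens : ∀ i, b i + q i ≤ d i / #(Y i) := fun i => (le_div_iff₀ (hY i)).2 (hdA i).2.1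
  have hcard : ∀ i, b i * #(Y i) ≤ d i := fun i =>
    (mul_le_mul_of_nonneg_right (le_add_of_nonneg_right (hq i).le) (hY i).le).trans (hdA i).2.1
  have hΛ := one_le_six_div hη₀ hη₁
  have hα : ∀ i, 0 < η * q i / 6 := fun i => by
    have := hq i
    positivity
  have hαD : ∀ i, 1 / (η * q i / 6) ≤ 6 / η * D := fun i => by
    rw [div_le_iff₀ (hα i)]
    exact (hqD i).trans_eq (by field_simp)
  rcases exists_row_codegree hX (fun i => (hdA i).1)
    (fun i u hu => ((hdA i).2.2 u hu).1.trans (colourNbhd_subset ..))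
    (fun i u hu => ((hdA i).2.2 u hu).2) hα hΛ (le_mul_of_one_le_right (by positivity) hD) hαD
    with ⟨u, hu, hrow⟩ | ⟨i, u, hu, hrow⟩
  · refine Or.inl ⟨u, hu, _, filter_subset _ _, hrow, fun i => ⟨A i u,
      isPageRefinement_of_le_card_inter (hdA i).1 (hcard i) (hdA i).2.2 hu (filter_subset _ _)
        fun x hx => le_trans ?_ ((mem_filter.1 hx).2 i)⟩⟩
    exact mul_le_mul_of_nonneg_right (by linarith [hdens i]) (Nat.cast_nonneg _)
  · refine Or.inr ⟨i, u, hu, _, filter_subset _ _, hrow, A i u,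
      isPageRefinement_of_le_card_inter (hdA i).1 (hcard i) (hdA i).2.2 hu (filter_subset _ _)
        fun x hx => le_trans ?_ (mem_filter.1 hx).2⟩
    have hΛα : 6 / η * (η * q i / 6) = q i := by field_simp
    exact mul_le_mul_of_nonneg_right (by linarith [hdens i]) (Nat.cast_nonneg _)

theorem IsDenseState.exists_colour_or_boost_step [Finite V] (h : IsDenseState c b q X Y)
    (hb : ∀ i, 0 ≤ b i) (hq : ∀ i, 0 < q i) (hη₀ : 0 < η) (hη₁ : η < 1) (hD : 1 ≤ D)
    (hqD : ∀ i, 1 ≤ q i * D) (hX : 32 * pairWeightBound (6 / η) ≤ #X) :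
    ∃ i, ∃ u ∈ X, ∃ X₁ Z : Finset V,
      (X₁ ⊆ colourNbhd c i u X ∧ (#X : ℝ) ≤ 32 * pairWeightBound (6 / η) * #X₁ ∧
        IsPageRefinement c i u (b i) (b i + q i * (1 - η)) X₁ (Y i) Z) ∨
      (X₁ ⊆ X ∧ (#X : ℝ) ≤ 32 * pairWeightBound (6 / η * D) * #X₁ ∧
        IsPageRefinement c i u (b i) (b i + q i * 2) X₁ (Y i) Z) := by
  have hΛ := one_le_six_div hη₀ hη₁
  have hF := one_le_pairWeightBound hΛ
  have hX₀ : X.Nonempty := card_pos.1 (Nat.cast_pos (α := ℝ).1 (by linarith))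
  rcases h.exists_isPageRefinement hX₀ hb hq hη₀ hη₁ hD hqD with
    ⟨u, hu, X', hX', hcard, hZ⟩ | ⟨i, u, hu, X₁, hX₁, hcard, Z, hZ⟩
  · have htwo : 2 ≤ #X' := by
      have : (2 : ℝ) ≤ #X' := by nlinarith
      exact_mod_cast this
    obtain ⟨i, hi⟩ := exists_card_le_four_mul_card_colourNbhd c u htwo
    have hi' : (#X' : ℝ) ≤ 4 * #(colourNbhd c i u X') := by exact_mod_cast hi
    obtain ⟨Z, hZ⟩ := hZ i
    exact ⟨i, u, hu, colourNbhd c i u X', Z, Or.inl ⟨colourNbhd_mono hX', by nlinarith,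
      hZ.mono (colourNbhd_subset ..)⟩⟩
  · have hF' := one_le_pairWeightBound (one_le_mul_of_one_le_of_one_le hΛ hD)
    refine ⟨i, u, hu, X₁, Z, Or.inr ⟨hX₁, hcard.trans ?_, hZ⟩⟩
    gcongr
    norm_num

/-- The surplus density kept in a colour in which `r` more spine vertices are wanted and `s` more
boosts are affordable: a vertex costs a factor `1 - η`, and a boost doubles the surplus. -/
noncomputable def surplus (η : ℝ) (r s : ℕ) : ℝ := (2 ^ s * (1 - η) ^ r)⁻¹

theorem surplus_pos (hη : η < 1) (r s : ℕ) : 0 < surplus η r s := by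
  have : 0 < 1 - η := sub_pos.2 hη
  unfold surplus
  positivity

theorem surplus_succ_left_mul (hη : η < 1) (r s : ℕ) :
    surplus η (r + 1) s * (1 - η) = surplus η r s := by
  have : 1 - η ≠ 0 := (sub_pos.2 hη).ne'
  unfold surplus
  rw [pow_succ, ← mul_assoc, mul_inv _ (1 - η), inv_mul_cancel_right₀ this]

theorem surplus_succ_right_mul_two (r s : ℕ) : surplus η r (s + 1) * 2 = surplus η r s := by
  unfold surplus
  rw [pow_succ, mul_right_comm, mul_inv _ (2 : ℝ), inv_mul_cancel_right₀ two_ne_zero]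

theorem one_le_surplus_mul_two_pow (hη₀ : 0 ≤ η) (hη₁ : η < 1) {r s S : ℕ} (hs : s ≤ S) :
    1 ≤ surplus η r s * 2 ^ S := by
  have hpos : 0 < 1 - η := sub_pos.2 hη₁
  unfold surplus
  rw [inv_mul_eq_div, one_le_div (by positivity)]
  calc 2 ^ s * (1 - η) ^ r ≤ (2 : ℝ) ^ s * 1 := by
        gcongr
        exact pow_le_one₀ hpos.le (by linarith)
    _ ≤ 2 ^ S := by
        rw [mul_one]
        exact pow_le_pow_right₀ one_le_two hs

theorem IsDenseState.hasLargeBook_or_ne_zero {r s : Fin 2 → ℕ} (hb : ∀ i, 0 < b i) (hη₀ : 0 ≤ η)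
    (hη₁ : η < 1) (h : IsDenseState c b (fun i => surplus η (r i) (s i)) X Y) (hX : X.Nonempty) :
    HasLargeBook c b r s X Y ∨ (∀ i, r i ≠ 0) ∧ ∀ i, s i ≠ 0 := by
  have hle := h.add_le_one hX
  by_cases hr : ∃ i, r i = 0
  · obtain ⟨i, hi⟩ := hr
    exact Or.inl (hasLargeBook_of_eq_zero hi (hb i).le
      (by linarith [hle i, surplus_pos hη₁ (r i) (s i)]))
  · refine Or.inr ⟨not_exists.1 hr, fun i hi => ?_⟩
    linarith [one_le_surplus_mul_two_pow (r := r i) hη₀ hη₁ hi.le, hle i, hb i]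

theorem exists_largeBook [Finite V] (hb : ∀ i, 0 < b i) (hη₀ : 0 < η) (hη₁ : η < 1) {S : ℕ}
    {r s : Fin 2 → ℕ} (hs : ∀ i, s i ≤ S)
    (h : IsDenseState c b (fun i => surplus η (r i) (s i)) X Y)
    (hX : (32 * pairWeightBound (6 / η)) ^ (∑ i, r i) *
      (32 * pairWeightBound (6 / η * 2 ^ S)) ^ (∑ i, s i) ≤ #X) : HasLargeBook c b r s X Y := by
  have hD : (1 : ℝ) ≤ 2 ^ S := one_le_pow₀ one_le_two
  have hΛ := one_le_six_div hη₀ hη₁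
  have hF := one_le_pairWeightBound hΛ
  have hF' := one_le_pairWeightBound (one_le_mul_of_one_le_of_one_le hΛ hD)
  set F := 32 * pairWeightBound (6 / η)
  set F' := 32 * pairWeightBound (6 / η * 2 ^ S)
  induction hn : ∑ i, r i + ∑ i, s i using Nat.strong_induction_on generalizing r s X Y with
  | h n ih =>
  have hpow : 1 ≤ F ^ (∑ i, r i) := one_le_pow₀ (by linarith)
  have hpow' : 1 ≤ F' ^ (∑ i, s i) := one_le_pow₀ (by linarith)
  obtain hbook | ⟨hr, hs₀⟩ := h.hasLargeBook_or_ne_zero hb hη₀.le hη₁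
    (card_pos.1 (Nat.cast_pos (α := ℝ).1 (by nlinarith)))
  · exact hbook
  have hFX : F ≤ #X := calc
    F ≤ F ^ (∑ i, r i) := le_self_pow₀ (by linarith) (by simp [hr])
    _ ≤ #X := (le_mul_of_one_le_right (by linarith) hpow').trans hX
  obtain ⟨i, u, hu, X₁, Z, ⟨hX₁, hcard, hZ⟩ | ⟨hX₁, hcard, hZ⟩⟩ :=
    h.exists_colour_or_boost_step (fun i => (hb i).le) (fun i => surplus_pos hη₁ _ _) hη₀ hη₁ hD
      (fun i => one_le_surplus_mul_two_pow hη₀.le hη₁ (hs i)) hFX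
  · obtain ⟨r', rfl⟩ := exists_eq_add_single (Nat.one_le_iff_ne_zero.2 (hr i))
    rw [sum_add_single] at hX hn
    refine (ih _ (by lia) hs (h.update (hX₁.trans (colourNbhd_subset ..)) hZ ?_ ?_) ?_ rfl
      ).of_colour_step (hb i).le hu hX₁ hZ.subset hZ.card_le
    · simp [surplus_succ_left_mul hη₁]
    · simp +contextual
    · exact le_of_mul_le_mul_left (le_trans (le_of_eq (by ring)) (hX.trans hcard))
        (by linarith : 0 < F)
  · obtain ⟨s', rfl⟩ := exists_eq_add_single (Nat.one_le_iff_ne_zero.2 (hs₀ i))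
    rw [sum_add_single] at hX hn
    refine (ih _ (by lia) (fun j => le_trans (by simp) (hs j)) (h.update hX₁ hZ ?_ ?_) ?_ rfl
      ).of_boost_step (hb i).le hX₁ (hZ.subset.trans (colourNbhd_subset ..)) hZ.card_le
    · simp [surplus_succ_right_mul_two]
    · simp +contextual
    · exact le_of_mul_le_mul_left (le_trans (le_of_eq (by ring)) (hX.trans hcard))
        (by linarith : 0 < F')

end TwoColours

end Books

section ErdosSzekeres

open Finset

variable {V κ : Type*}

/-- Some `k` vertices of `W` form a clique of colour `i`. -/
def HasMonoClique (c : Sym2 V → κ) (i : κ) (k : ℕ) (W : Finset V) : Prop :=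
  ∃ T ⊆ W, #T = k ∧ IsMonoClique c i T

theorem hasMonoClique_zero (c : Sym2 V → κ) (i : κ) (W : Finset V) : HasMonoClique c i 0 W :=
  ⟨∅, empty_subset W, card_empty, isMonoClique_empty c i⟩

theorem HasMonoClique.mono {c : Sym2 V → κ} {i : κ} {k : ℕ} {W W' : Finset V}
    (h : HasMonoClique c i k W) (hW : W ⊆ W') : HasMonoClique c i k W' :=
  let ⟨T, hT, hTk⟩ := h
  ⟨T, hT.trans hW, hTk⟩

theorem hasMonoClique_one {c : Sym2 V → κ} {i : κ} {W : Finset V} (hW : W.Nonempty) :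
    HasMonoClique c i 1 W :=
  let ⟨u, hu⟩ := hW
  ⟨{u}, singleton_subset_iff.2 hu, card_singleton u, by simp [IsMonoClique]⟩

theorem IsMonoBook.hasMonoClique {c : Sym2 V → κ} {i : κ} {T M W : Finset V}
    {k : ℕ} (h : IsMonoBook c i T M) (hT : T ⊆ W) (hM : M ⊆ W) (hk : HasMonoClique c i k M) :
    HasMonoClique c i (k + #T) W := by
  classical
  obtain ⟨A, hA, hAk, hAc⟩ := hk
  have hdisj : Disjoint A T := disjoint_left.2 fun v hvA hvT => (h.pages v hvT v (hA hvA)).1 rfl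
  refine ⟨A ∪ T, union_subset (hA.trans hM) hT, by rw [card_union_of_disjoint hdisj, hAk], ?_⟩
  unfold IsMonoClique
  rw [coe_union, Set.pairwise_union]
  exact ⟨hAc, h.spine, fun v hv u hu _ => by
    have huv := (h.pages u hu v (hA hv)).2
    exact ⟨Sym2.eq_swap ▸ huv, huv⟩⟩

section Neighbourhood

variable [DecidableEq V] [DecidableEq κ]

theorem HasMonoClique.of_colourNbhd {c : Sym2 V → κ} {i : κ} {u : V} {k : ℕ} {W : Finset V}
    (h : HasMonoClique c i k (colourNbhd c i u W)) (hu : u ∈ W) : HasMonoClique c i (k + 1) W := by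
  have hbook : IsMonoBook c i {u} (colourNbhd c i u W) :=
    ⟨by simp [IsMonoClique], by simp +contextual [mem_colourNbhd]⟩
  simpa using hbook.hasMonoClique (singleton_subset_iff.2 hu) (colourNbhd_subset ..) h

theorem HasMonoClique.add_single_of_colourNbhd {c : Sym2 V → κ} {i j : κ} {u : V} {k : κ → ℕ}
    {W : Finset V} (h : HasMonoClique c j (k j) (colourNbhd c i u W)) (hu : u ∈ W) :
    HasMonoClique c j ((k + Pi.single i 1 : κ → ℕ) j) W := by
  rcases eq_or_ne j i with rfl | hji
  · simpa using h.of_colourNbhd hu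
  · simpa [hji] using h.mono (colourNbhd_subset ..)

end Neighbourhood

theorem hasMonoClique_succ_or_of_choose_le {c : Sym2 V → Fin 2} {j m : ℕ} {W : Finset V}
    (hW : (j + m).choose j ≤ #W) : HasMonoClique c 0 (j + 1) W ∨ HasMonoClique c 1 (m + 1) W := by
  classical
  induction j generalizing m W with
  | zero => exact Or.inl (hasMonoClique_one (card_pos.1 (by simpa using hW)))
  | succ j ihj =>
    induction m generalizing W with
    | zero => exact Or.inr (hasMonoClique_one (card_pos.1 (by simpa using hW)))
    | succ m ihm =>
      obtain ⟨u, hu⟩ := card_pos.1 ((Nat.choose_pos (Nat.le_add_right _ _)).trans_le hW)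
      have hcard := card_le_card_colourNbhd_add c u W
      have hpascal := Nat.choose_succ_succ (j + (m + 1)) j
      rw [Nat.add_right_comm j 1] at hW
      by_cases h₀ : (j + (m + 1)).choose j ≤ #(colourNbhd c 0 u W)
      · exact (ihj h₀).imp (·.of_colourNbhd hu) (·.mono (colourNbhd_subset ..))
      · have h₁ : (j + 1 + m).choose (j + 1) ≤ #(colourNbhd c 1 u W) := by
          rw [show j + 1 + m = j + (m + 1) by lia]
          lia
        exact (ihm h₁).imp (·.mono (colourNbhd_subset ..)) (·.of_colourNbhd hu)

theorem two_mul_choose_le (k l : ℕ) : 2 * (k + l).choose k ≤ (k + 1 + (l + 1)).choose (k + 1) := by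
  have hpascal : (k + 1 + (l + 1)).choose (k + 1) =
      (k + l + 1).choose k + (k + l + 1).choose (k + 1) := by
    rw [show k + 1 + (l + 1) = k + l + 1 + 1 by lia, Nat.choose_succ_succ']
  have hle : (k + l).choose k ≤ (k + l + 1).choose k := Nat.choose_le_choose k (Nat.le_succ _)
  have hle' : (k + l).choose k ≤ (k + l + 1).choose (k + 1) := by
    rw [Nat.choose_succ_succ']
    exact Nat.le_add_right _ _
  lia

theorem two_pow_le_choose {n k l : ℕ} (hk : n ≤ k) (hl : n ≤ l) : 2 ^ n ≤ (k + l).choose k := by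
  induction n generalizing k l with
  | zero => exact Nat.choose_pos (Nat.le_add_right k l)
  | succ n ih =>
    obtain ⟨k, rfl⟩ := Nat.exists_eq_add_of_le' (Nat.one_le_of_lt hk)
    obtain ⟨l, rfl⟩ := Nat.exists_eq_add_of_le' (Nat.one_le_of_lt hl)
    rw [pow_succ']
    exact (Nat.mul_le_mul_left 2 (ih (Nat.le_of_succ_le_succ hk) (Nat.le_of_succ_le_succ hl))).trans
      (two_mul_choose_le k l)

/-- The Erdős–Szekeres bound for two-colourings without a clique of size `k i` in colour `i`. -/
def esBound (k : Fin 2 → ℕ) : ℕ := (k 0 + k 1).choose (k 0)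

theorem esBound_eq_choose (k : Fin 2 → ℕ) (i : Fin 2) :
    esBound k = (k i + k (1 - i)).choose (k i) := by
  fin_cases i
  · rfl
  · exact Nat.choose_symm_add.trans (congrArg (Nat.choose · _) (add_comm _ _))

theorem exists_hasMonoClique_of_esBound_le {c : Sym2 V → Fin 2} {k : Fin 2 → ℕ} {W : Finset V}
    (hW : esBound k ≤ #W) : ∃ i, HasMonoClique c i (k i) W := by
  by_cases hk : ∃ i, k i = 0
  · obtain ⟨i, hi⟩ := hk
    exact ⟨i, hi ▸ hasMonoClique_zero c i W⟩
  · push Not at hk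
    obtain ⟨j, hj⟩ := Nat.exists_eq_succ_of_ne_zero (hk 0)
    obtain ⟨m, hm⟩ := Nat.exists_eq_succ_of_ne_zero (hk 1)
    unfold esBound at hW
    rw [hj, hm] at hW
    have hle : (j + m).choose j ≤ #W :=
      (Nat.le_mul_of_pos_left _ two_pos).trans ((two_mul_choose_le j m).trans hW)
    rcases hasMonoClique_succ_or_of_choose_le hle with h | h
    · exact ⟨0, hj ▸ h⟩
    · exact ⟨1, hm ▸ h⟩

theorem IsMonoBook.card_pages_lt {c : Sym2 V → Fin 2} {i : Fin 2} {T M W : Finset V}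
    {k : Fin 2 → ℕ} (h : IsMonoBook c i T M) (hT : T ⊆ W) (hM : M ⊆ W)
    (hW : ∀ j, ¬ HasMonoClique c j ((k + Pi.single i #T : Fin 2 → ℕ) j) W) :
    #M < esBound k := by
  by_contra! hle
  obtain ⟨j, hj⟩ := exists_hasMonoClique_of_esBound_le (c := c) hle
  rcases eq_or_ne j i with rfl | hji
  · exact hW j (by simpa using h.hasMonoClique hT hM hj)
  · exact hW j (by simpa [hji] using hj.mono hM)

/-- The proportion of `∑ j, k j` contributed by `k i`. -/
noncomputable def colourShare (k : Fin 2 → ℕ) (i : Fin 2) : ℝ := k i / (k i + k (1 - i))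

theorem colourShare_add_colourShare_one_sub {k : Fin 2 → ℕ} {i : Fin 2} (hk : 0 < k i) :
    colourShare k i + colourShare k (1 - i) = 1 := by
  have : (0 : ℝ) < k i := Nat.cast_pos.2 hk
  simp only [colourShare, sub_sub_cancel]
  field_simp
  ring

theorem sub_div_sub_add_le {n l j : ℝ} (hn : 0 < n) (hl : 0 ≤ l) (hj : j < n) :
    (n - j) / (n - j + l) ≤ n / (n + l) * Real.exp (-(j * (l / (n * (n + l))))) := by
  have : 0 < n - j := sub_pos.2 hj
  have hexp := Real.add_one_le_exp (-(j * (l / (n * (n + l)))))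
  refine le_trans ?_ (mul_le_mul_of_nonneg_left hexp (by positivity))
  rw [div_le_iff₀ (by positivity), ← sub_nonneg]
  have hgap : n / (n + l) * (-(j * (l / (n * (n + l)))) + 1) * (n - j + l) - (n - j) =
      j ^ 2 * l / (n + l) ^ 2 := by
    field_simp
    ring
  rw [hgap]
  positivity

theorem choose_le_pow_mul_exp_mul_choose {n l m j : ℕ} (hn : m + j = n) (hn₀ : 0 < n) :
    ((m + l).choose m : ℝ) ≤ (n / (n + l)) ^ j *
      Real.exp (-(j.choose 2 * (l / (n * (n + l))))) * (n + l).choose n := by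
  induction j generalizing m with
  | zero => simp [← hn]
  | succ j ih =>
    have ih := ih (m := m + 1) (by lia)
    have hn' : (m : ℝ) + (j + 1) = n := by exact_mod_cast hn
    have hchoose : ((m + l).choose m : ℝ) = (m + 1) / (m + 1 + l) * (m + 1 + l).choose (m + 1) := by
      have h := Nat.add_one_mul_choose_eq (m + l) m
      rw [Nat.add_right_comm] at h
      rw [div_mul_eq_mul_div, eq_div_iff (by positivity), mul_comm]
      exact_mod_cast h.trans (mul_comm _ _)
    have hfactor : ((m : ℝ) + 1) / (m + 1 + l) ≤
        n / (n + l) * Real.exp (-(j * (l / (n * (n + l))))) := by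
      have hm : (n : ℝ) - j = m + 1 := by linarith
      simpa only [hm] using sub_div_sub_add_le (Nat.cast_pos.2 hn₀) (Nat.cast_nonneg l)
        (by linarith [hm, Nat.cast_nonneg (α := ℝ) m] : (j : ℝ) < n)
    calc ((m + l).choose m : ℝ) = (m + 1) / (m + 1 + l) * (m + 1 + l).choose (m + 1) := hchoose
      _ ≤ (n / (n + l) * Real.exp (-(j * (l / (n * (n + l)))))) *
          ((n / (n + l)) ^ j * Real.exp (-(j.choose 2 * (l / (n * (n + l))))) *
            (n + l).choose n) := by gcongr
      _ = _ := by
        rw [Nat.choose_succ_succ' j 1, Nat.choose_one_right, Nat.cast_add, add_mul, neg_add,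
          Real.exp_add]
        ring

theorem esBound_le (k : Fin 2 → ℕ) (i : Fin 2) {t : ℕ} (ht : 0 < t) :
    (esBound k : ℝ) ≤ colourShare (k + Pi.single i t) i ^ t *
      Real.exp (-(t.choose 2 * (k (1 - i) / ((k i + t) * (k i + t + k (1 - i)))))) *
      esBound (k + Pi.single i t) := by
  have h := choose_le_pow_mul_exp_mul_choose (l := k (1 - i)) (rfl : k i + t = _) (by lia)
  have hi : 1 - i ≠ i := by fin_cases i <;> decide
  simpa [esBound_eq_choose _ i, colourShare, hi] using h

end ErdosSzekeres

section RegularColourings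

open Finset

theorem exp_neg_two_mul_le_one_sub {x : ℝ} (hx₀ : 0 ≤ x) (hx : x ≤ 1 / 2) :
    Real.exp (-(2 * x)) ≤ 1 - x := by
  rw [Real.exp_neg]
  refine inv_le_of_inv_le₀ (by linarith) ?_
  calc (1 - x)⁻¹ ≤ 2 * x + 1 := by
        rw [inv_le_iff_one_le_mul₀ (by linarith)]
        nlinarith
    _ ≤ Real.exp (2 * x) := Real.add_one_le_exp _

theorem surplus_le {t S : ℕ} (ht : 2 ≤ t) {x : ℝ} (hx : 0 < x) (hS : 8 * x ≤ 2 ^ S) :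
    surplus (1 / t) t S ≤ 1 / x := by
  have ht₀ : (2 : ℝ) ≤ t := Nat.ofNat_le_cast.2 ht
  have hpow : 1 / 8 ≤ (1 - 1 / (t : ℝ)) ^ t := calc
    (1 / 8 : ℝ) ≤ Real.exp (-2) := by
      rw [Real.exp_neg, one_div]
      refine inv_anti₀ (Real.exp_pos 2) ?_
      rw [show (2 : ℝ) = 1 + 1 by norm_num, Real.exp_add]
      nlinarith [Real.exp_one_lt_d9, Real.exp_pos 1]
    _ = Real.exp (-(2 * (1 / t))) ^ t := by
      rw [← Real.exp_nat_mul]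
      congr 1
      field_simp
    _ ≤ (1 - 1 / (t : ℝ)) ^ t := by
      gcongr
      exact exp_neg_two_mul_le_one_sub (by positivity) (by gcongr)
  rw [surplus, one_div x]
  refine inv_anti₀ hx ?_
  calc x = 8 * x * (1 / 8) := by ring
    _ ≤ 2 ^ S * (1 - 1 / (t : ℝ)) ^ t := by gcongr

theorem pairWeightBound_le_exp {M y : ℝ} (hy : 1152 ≤ y) (h : M ≤ y ^ 2) :
    32 * pairWeightBound M ≤ Real.exp (2 * y) := by
  have hcube : y ^ 3 / 6 ≤ Real.exp y := by
    simpa [Nat.factorial] using Real.pow_div_factorial_le_exp y (by linarith) 3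
  calc 32 * pairWeightBound M ≤ 32 * (6 * y ^ 2 * Real.exp y) := by
        gcongr
        exact pairWeightBound_le (by linarith) h
    _ = 192 * y ^ 2 * Real.exp y := by ring
    _ ≤ Real.exp y * Real.exp y := by
        gcongr
        nlinarith [sq_nonneg y]
    _ = Real.exp (2 * y) := by rw [two_mul, Real.exp_add]

theorem exists_two_pow_between {a : ℕ} (ha : 200 ≤ a) :
    ∃ S ≤ a, 8 * a ^ 5 ≤ 2 ^ S ∧ 2 ^ S ≤ 16 * a ^ 5 := by
  have hpow : 8 * a ^ 5 ≤ 2 ^ a := calc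
    8 * a ^ 5 ≤ 8 * (10 * 2 ^ (a / 10)) ^ 5 := by
      gcongr
      have := Nat.lt_two_pow_self (n := a / 10)
      lia
    _ = 800000 * 2 ^ (a / 10 * 5) := by
      rw [pow_mul, mul_pow]
      ring
    _ ≤ 2 ^ (a / 10 * 5) * 2 ^ (a / 10 * 5) := by
      gcongr
      calc 800000 ≤ 2 ^ 20 := by norm_num
        _ ≤ 2 ^ (a / 10 * 5) := by
          gcongr
          · norm_num
          · lia
    _ ≤ 2 ^ a := by
      rw [← pow_add]
      gcongr
      · norm_num
      · lia
  have ha₅ : 0 < a ^ 5 := by positivity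
  refine ⟨Nat.clog 2 (8 * a ^ 5), Nat.clog_le_of_le_pow hpow, Nat.le_pow_clog one_lt_two _, ?_⟩
  have hlt := Nat.pow_pred_clog_lt_self one_lt_two (x := 8 * a ^ 5) (by lia)
  have hclog : 0 < Nat.clog 2 (8 * a ^ 5) := Nat.clog_pos one_lt_two (by lia)
  calc 2 ^ Nat.clog 2 (8 * a ^ 5) = 2 * 2 ^ (Nat.clog 2 (8 * a ^ 5)).pred := by
        rw [← pow_succ', Nat.pred_eq_sub_one, Nat.sub_add_cancel hclog]
    _ ≤ 16 * a ^ 5 := by lia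

theorem pow_mul_exp_neg_le_sub_pow {p δ : ℝ} (hδ : 0 ≤ δ) (hp : 0 < p) (hδp : 2 * δ ≤ p) (t : ℕ) :
    p ^ t * Real.exp (-(t * (2 * (δ / p)))) ≤ (p - δ) ^ t := by
  have hhalf : δ / p ≤ 1 / 2 := by
    rw [div_le_iff₀ hp]
    linarith
  calc p ^ t * Real.exp (-(t * (2 * (δ / p)))) = (p * Real.exp (-(2 * (δ / p)))) ^ t := by
        rw [mul_pow, ← Real.exp_nat_mul, mul_neg]
    _ ≤ (p * (1 - δ / p)) ^ t := by
        gcongr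
        exact exp_neg_two_mul_le_one_sub (by positivity) hhalf
    _ = (p - δ) ^ t := by rw [mul_one_sub, mul_div_cancel₀ _ hp.ne']

theorem exp_neg_four_mul_le_sub {L p δ : ℝ} (hL : 0 < L) (hp : 1 / (2 * L) ≤ p)
    (hδp : 2 * δ ≤ p) : Real.exp (-(4 * L)) ≤ p - δ := calc
  Real.exp (-(4 * L)) ≤ (4 * L)⁻¹ := by
    rw [Real.exp_neg]
    exact inv_anti₀ (by positivity) (by linarith [Real.add_one_le_exp (4 * L)])
  _ = 1 / (2 * L) / 2 := by
    field_simp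
    norm_num
  _ ≤ p - δ := by linarith

theorem two_mul_three_div_pow_le {L p : ℝ} {a : ℕ} (ha : 0 < a) (hL : 1 ≤ L) (haL : 12 * L ≤ a)
    (hp : 1 / (2 * L) ≤ p) : 2 * (3 / (a : ℝ) ^ 5) ≤ p := by
  refine le_trans ?_ hp
  rw [← mul_div_assoc, div_le_div_iff₀ (by positivity) (by positivity)]
  linarith [le_self_pow₀ (Nat.one_le_cast (α := ℝ).2 ha) (n := 5) (by norm_num)]

theorem pow_mul_exp_neg_le_sub_div_pow {L p : ℝ} {a S : ℕ} (ha : 0 < a) (hL : 1 ≤ L)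
    (haL : 12 * L ≤ a) (hS : S ≤ a) (hp : 1 / (2 * L) ≤ p) :
    p ^ (a ^ 6) * Real.exp (-(16 * (L * a))) ≤ (p - 3 / a ^ 5) ^ (a ^ 6 + S) := by
  have hp₀ : 0 < p := lt_of_lt_of_le (by positivity) hp
  have hδp := two_mul_three_div_pow_le ha hL haL hp
  have hδ : (a : ℝ) ^ 6 * (2 * (3 / a ^ 5 / p)) ≤ 12 * (L * a) := calc
    (a : ℝ) ^ 6 * (2 * (3 / a ^ 5 / p)) ≤ a ^ 6 * (2 * (3 / a ^ 5 / (1 / (2 * L)))) := by gcongr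
    _ = 12 * (L * a) := by
      field_simp
      norm_num
  have hspine : p ^ (a ^ 6) * Real.exp (-(12 * (L * a))) ≤ (p - 3 / a ^ 5) ^ (a ^ 6) := by
    refine le_trans ?_ (pow_mul_exp_neg_le_sub_pow (by positivity) hp₀ hδp (a ^ 6))
    push_cast
    gcongr
  have hboost : Real.exp (-(4 * (L * a))) ≤ (p - 3 / a ^ 5) ^ S := calc
    Real.exp (-(4 * (L * a))) ≤ Real.exp (-(4 * (L * S))) := by gcongr
    _ = Real.exp (-(4 * L)) ^ S := by
      rw [← Real.exp_nat_mul]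
      ring_nf
    _ ≤ (p - 3 / a ^ 5) ^ S := by
      gcongr
      exact exp_neg_four_mul_le_sub (by linarith) hp hδp
  calc p ^ (a ^ 6) * Real.exp (-(16 * (L * a)))
      = p ^ (a ^ 6) * Real.exp (-(12 * (L * a))) * Real.exp (-(4 * (L * a))) := by
        rw [mul_assoc, ← Real.exp_add]
        ring_nf
    _ ≤ (p - 3 / a ^ 5) ^ (a ^ 6) * (p - 3 / a ^ 5) ^ S :=
        mul_le_mul hspine hboost (Real.exp_pos _).le ((by positivity : (0 : ℝ) ≤ _).trans hspine)
    _ = (p - 3 / a ^ 5) ^ (a ^ 6 + S) := (pow_add ..).symm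

theorem one_div_two_mul_le_colourShare {k : Fin 2 → ℕ} {i : Fin 2} {L : ℝ} (hL : 1 ≤ L)
    (hk : 0 < k i) (hkL : (k (1 - i) : ℝ) ≤ L * k i) : 1 / (2 * L) ≤ colourShare k i := by
  have : (0 : ℝ) < k i := Nat.cast_pos.2 hk
  rw [colourShare, div_le_div_iff₀ (by positivity) (by positivity)]
  nlinarith

theorem sq_div_le_choose_two_mul {L x l : ℝ} {a : ℕ} (ha : 2 ≤ a) (hL : 1 ≤ L)
    (hx₀ : 0 < x) (hx : x ≤ L * a ^ 10) (hl : a ^ 10 ≤ l) :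
    a ^ 2 / (8 * L ^ 2) ≤ ((a ^ 6).choose 2 : ℝ) * (l / (x * (x + l))) := by
  have ha₀ : (2 : ℝ) ≤ a := Nat.ofNat_le_cast.2 ha
  have hl₀ : 0 < l := lt_of_lt_of_le (by positivity) hl
  have hchoose : (a : ℝ) ^ 12 / 4 ≤ (a ^ 6).choose 2 := by
    rw [Nat.cast_choose_two]
    push_cast
    nlinarith [le_self_pow₀ (by linarith : (1 : ℝ) ≤ a) (n := 6) (by norm_num)]
  have hrate : 1 / (2 * L ^ 2 * a ^ 10) ≤ l / (x * (x + l)) := by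
    rw [div_le_div_iff₀ (by positivity) (by positivity)]
    have hxl : x ≤ L * l := hx.trans (by gcongr)
    have : x * (x + l) ≤ L * a ^ 10 * (L * l + L * l) := by
      gcongr
      nlinarith
    linarith
  calc (a : ℝ) ^ 2 / (8 * L ^ 2) = a ^ 12 / 4 * (1 / (2 * L ^ 2 * a ^ 10)) := by
        field_simp
        norm_num
    _ ≤ ((a ^ 6).choose 2 : ℝ) * (l / (x * (x + l))) := by gcongr

theorem pairWeightBound_pow_mul_pow_le {a S : ℕ} (ha : 200 ≤ a) (hSa : S ≤ a)
    (hS : 2 ^ S ≤ 16 * a ^ 5) :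
    (32 * pairWeightBound (6 * a ^ 6)) ^ (2 * a ^ 6) *
      (32 * pairWeightBound (6 * a ^ 6 * 2 ^ S)) ^ (2 * S) ≤ Real.exp (12 * a ^ 9 + 4 * a ^ 7) := by
  have ha₀ : (200 : ℝ) ≤ a := Nat.ofNat_le_cast.2 ha
  have hS' : (2 : ℝ) ^ S ≤ 16 * a ^ 5 := by exact_mod_cast hS
  have hspine : 32 * pairWeightBound (6 * a ^ 6) ≤ Real.exp (2 * (3 * a ^ 3)) :=
    pairWeightBound_le_exp (by nlinarith [pow_le_pow_left₀ (by norm_num) ha₀ 3])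
      (by nlinarith [pow_nonneg (Nat.cast_nonneg (α := ℝ) a) 6])
  have hboost : 32 * pairWeightBound (6 * a ^ 6 * 2 ^ S) ≤ Real.exp (2 * a ^ 6) :=
    pairWeightBound_le_exp (by linarith [pow_le_pow_left₀ (by norm_num) ha₀ 6]) <| calc
      6 * (a : ℝ) ^ 6 * 2 ^ S ≤ 6 * a ^ 6 * (16 * a ^ 5) := by gcongr
      _ = 96 * (a : ℝ) ^ 11 := by ring
      _ ≤ (a : ℝ) * a ^ 11 := by gcongr; linarith
      _ = ((a : ℝ) ^ 6) ^ 2 := by ring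
  have hone : (1 : ℝ) ≤ 6 * a ^ 6 := by linarith [pow_le_pow_left₀ (by norm_num) ha₀ 6]
  have hpos := one_le_pairWeightBound hone
  have hpos' := one_le_pairWeightBound
    (one_le_mul_of_one_le_of_one_le hone (one_le_pow₀ one_le_two (n := S)))
  calc (32 * pairWeightBound (6 * a ^ 6)) ^ (2 * a ^ 6) *
        (32 * pairWeightBound (6 * a ^ 6 * 2 ^ S)) ^ (2 * S)
      ≤ Real.exp (2 * (3 * a ^ 3)) ^ (2 * a ^ 6) * Real.exp (2 * a ^ 6) ^ (2 * S) := by gcongr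
    _ = Real.exp (12 * a ^ 9 + 4 * a ^ 6 * S) := by
        rw [← Real.exp_nat_mul, ← Real.exp_nat_mul, ← Real.exp_add]
        push_cast
        ring_nf
    _ ≤ Real.exp (12 * a ^ 9 + 4 * a ^ 6 * a) := by gcongr
    _ = Real.exp (12 * a ^ 9 + 4 * a ^ 7) := by ring_nf

theorem one_add_one_div_pow_le_exp {a j : ℕ} (ha : 0 < a) (hj : j ≤ a ^ 6) :
    (1 + 1 / (a : ℝ) ^ 5) ^ j ≤ Real.exp a := calc
  (1 + 1 / (a : ℝ) ^ 5) ^ j ≤ (1 + 1 / (a : ℝ) ^ 5) ^ (a ^ 6) :=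
    pow_le_pow_right₀ (le_add_of_nonneg_right (by positivity)) hj
  _ ≤ Real.exp (1 / (a : ℝ) ^ 5) ^ (a ^ 6) := by
    gcongr
    linarith [Real.add_one_le_exp (1 / (a : ℝ) ^ 5)]
  _ = Real.exp a := by
    rw [← Real.exp_nat_mul]
    push_cast
    congr 1
    field_simp

theorem le_esBound_add_single {k : Fin 2 → ℕ} {i : Fin 2} {x : ℝ}
    (h : colourShare (k + Pi.single i 1) i * x ≤ esBound k) : x ≤ esBound (k + Pi.single i 1) := by
  have hshare : 0 < colourShare (k + Pi.single i 1) i := by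
    have : (0 : ℝ) < (k + Pi.single i 1 : Fin 2 → ℕ) i := by simp [Nat.cast_add_one_pos]
    unfold colourShare
    positivity
  have hes : (esBound k : ℝ) ≤
      colourShare (k + Pi.single i 1) i * esBound (k + Pi.single i 1) := by
    simpa using esBound_le k i one_pos
  exact le_of_mul_le_mul_left (h.trans hes) hshare

section Density

variable {V : Type*} {c : Sym2 V → Fin 2} {W : Finset V} {k : Fin 2 → ℕ} {L : ℝ} {a : ℕ}

theorem IsMonoBook.card_pages_le {i : Fin 2} {T M : Finset V} (ha : 2 ≤ a) (hL : 1 ≤ L)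
    (hk : ∀ i, a ^ 10 ≤ k i) (hkL : ∀ i, k i ≤ L * a ^ 10)
    (hW : ∀ j, ¬ HasMonoClique c j (k j) W) (h : IsMonoBook c i T M) (hT : T ⊆ W) (hM : M ⊆ W)
    (hTa : #T = a ^ 6) : (#M : ℝ) ≤
      colourShare k i ^ (a ^ 6) * Real.exp (-(a ^ 2 / (8 * L ^ 2))) * esBound k := by
  have hki : a ^ 6 ≤ k i := (Nat.pow_le_pow_right (by lia) (by norm_num)).trans (hk i)
  obtain ⟨k', rfl⟩ := exists_eq_add_single hki
  have hi : 1 - i ≠ i := by fin_cases i <;> decide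
  have hl := hk (1 - i)
  have hn := hkL i
  simp only [Pi.add_apply, Pi.single_eq_same, Pi.single_eq_of_ne hi, add_zero] at hl hn
  push_cast at hn
  have hl' : (a : ℝ) ^ 10 ≤ k' (1 - i) := by exact_mod_cast hl
  have hgain := sq_div_le_choose_two_mul ha hL (by positivity) hn hl'
  have hlt : (#M : ℝ) ≤ esBound k' := by
    exact_mod_cast (h.card_pages_lt hT hM (hTa ▸ hW)).le
  have hes := esBound_le k' i (t := a ^ 6) (by positivity)
  push_cast at hes
  refine (hlt.trans hes).trans ?_
  have : 0 ≤ colourShare (k' + Pi.single i (a ^ 6)) i := by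
    unfold colourShare
    positivity
  gcongr

theorem exp_le_exp_neg_mul_esBound (ha : 200 ≤ a) (hk : ∀ i, a ^ 10 ≤ k i) :
    Real.exp (12 * a ^ 9 + 4 * a ^ 7) ≤ Real.exp (-(2 * a)) * esBound k := by
  have ha₀ : (200 : ℝ) ≤ a := Nat.ofNat_le_cast.2 ha
  have hexponent : 12 * (a : ℝ) ^ 9 + 4 * a ^ 7 ≤ -(2 * a) + a ^ 10 / 2 := by
    have h₁₀ : 200 * (a : ℝ) ^ 9 ≤ a ^ 10 := by
      rw [pow_succ' (a : ℝ) 9]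
      gcongr
    have h₇ : (a : ℝ) ^ 7 ≤ a ^ 9 := pow_le_pow_right₀ (by linarith) (by norm_num)
    linarith [le_self_pow₀ (by linarith : (1 : ℝ) ≤ a) (n := 9) (by norm_num)]
  have hexp : Real.exp (a ^ 10 / 2) ≤ esBound k := calc
    Real.exp (a ^ 10 / 2) ≤ Real.exp ((a ^ 10 : ℕ) * Real.log 2) := by
      push_cast
      gcongr
      nlinarith [Real.log_two_gt_d9, pow_nonneg (Nat.cast_nonneg (α := ℝ) a) 10]
    _ = 2 ^ (a ^ 10) := by rw [Real.exp_nat_mul, Real.exp_log two_pos]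
    _ ≤ esBound k := by exact_mod_cast two_pow_le_choose (hk 0) (hk 1)
  calc Real.exp (12 * a ^ 9 + 4 * a ^ 7) ≤ Real.exp (-(2 * a) + a ^ 10 / 2) := by gcongr
    _ = Real.exp (-(2 * a)) * Real.exp (a ^ 10 / 2) := Real.exp_add _ _
    _ ≤ Real.exp (-(2 * a)) * esBound k := by gcongr

variable [Finite V]

section

variable [DecidableEq V]

theorem exists_isMonoBook_of_density {p : Fin 2 → ℝ} (ha : 200 ≤ a) (hL : 1 ≤ L)
    (haL : 12 * L ≤ a) (hp : ∀ i, 1 / (2 * L) ≤ p i)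
    (hdeg : ∀ i, ∀ x ∈ W, (p i - 2 / a ^ 5) * #W ≤ #(colourNbhd c i x W))
    (hW : Real.exp (12 * a ^ 9 + 4 * a ^ 7) ≤ #W) :
    ∃ i, ∃ T ⊆ W, ∃ M ⊆ W, #T = a ^ 6 ∧ IsMonoBook c i T M ∧
      p i ^ (a ^ 6) * Real.exp (-(16 * (L * a))) * #W ≤ #M := by
  obtain ⟨S, hSa, hS, hS'⟩ := exists_two_pow_between ha
  have : 0 < a := by lia
  have hone : 1 < a ^ 6 := Nat.one_lt_pow (by norm_num) (by lia)
  have hsurplus : surplus (1 / (a ^ 6 : ℕ)) (a ^ 6) S ≤ 1 / (a : ℝ) ^ 5 :=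
    surplus_le hone (by positivity) (by exact_mod_cast hS)
  have hstate : IsDenseState c (fun i => p i - 3 / a ^ 5)
      (fun _ => surplus (1 / (a ^ 6 : ℕ)) (a ^ 6) S) W (fun _ => W) := by
    refine ⟨fun _ => card_pos.1 (Nat.cast_pos (α := ℝ).1 ((Real.exp_pos _).trans_le hW)),
      fun i x hx => le_trans ?_ (hdeg i x hx)⟩
    refine mul_le_mul_of_nonneg_right ?_ (Nat.cast_nonneg _)
    linarith [show (2 : ℝ) / a ^ 5 = 3 / a ^ 5 - 1 / a ^ 5 by ring]
  have hb : ∀ i, 0 < p i - 3 / (a : ℝ) ^ 5 := fun i =>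
    (Real.exp_pos _).trans_le (exp_neg_four_mul_le_sub (by linarith) (hp i)
      (two_mul_three_div_pow_le (by lia) hL haL (hp i)))
  have hη : 1 / ((a ^ 6 : ℕ) : ℝ) < 1 :=
    (div_lt_one (by positivity)).2 (Nat.one_lt_cast.2 hone)
  obtain ⟨i, T, hT, M, hM, hTa, hbook, hle⟩ := exists_largeBook (r := fun _ => a ^ 6)
    (s := fun _ => S) hb (by positivity) hη (fun _ => le_rfl) hstate
    (by simpa using (pairWeightBound_pow_mul_pow_le ha hSa hS').trans hW)
  refine ⟨i, T, hT, M, hM, hTa, hbook, le_trans ?_ hle⟩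
  gcongr
  exact pow_mul_exp_neg_le_sub_div_pow (by lia) hL haL hSa (hp i)

theorem card_le_exp_neg_mul_esBound (hL : 1 ≤ L) (haL : 200 * L ^ 3 ≤ a)
    (hk : ∀ i, a ^ 10 ≤ k i) (hkL : ∀ i, k i ≤ L * a ^ 10)
    (hdeg : ∀ i, ∀ x ∈ W, (colourShare k i - 2 / a ^ 5) * #W ≤ #(colourNbhd c i x W))
    (hW : ∀ i, ¬ HasMonoClique c i (k i) W) : (#W : ℝ) ≤ Real.exp (-(2 * a)) * esBound k := by
  have hLL : L ≤ L ^ 3 := le_self_pow₀ hL (by norm_num)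
  have ha : 200 ≤ a := Nat.ofNat_le_cast.1 (by linarith : (200 : ℝ) ≤ a)
  have hshare : ∀ i, 1 / (2 * L) ≤ colourShare k i := fun i => by
    have hki : (a : ℝ) ^ 10 ≤ k i := by exact_mod_cast hk i
    refine one_div_two_mul_le_colourShare hL ((by positivity : 0 < a ^ 10).trans_le (hk i)) ?_
    exact (hkL (1 - i)).trans (by gcongr)
  have hexponent : 16 * (L * a) + 2 * a ≤ a ^ 2 / (8 * L ^ 2) := by
    rw [le_div_iff₀ (by positivity)]
    calc (16 * (L * a) + 2 * a) * (8 * L ^ 2) ≤ (16 * (L * a) + 2 * (L * a)) * (8 * L ^ 2) := by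
          gcongr
          exact le_mul_of_one_le_left (Nat.cast_nonneg a) hL
      _ = 144 * L ^ 3 * a := by ring
      _ ≤ a * a := by
          gcongr
          linarith
      _ = a ^ 2 := (sq _).symm
  by_contra! hlt
  obtain ⟨i, T, hT, M, hM, hTa, hbook, hle⟩ := exists_isMonoBook_of_density ha hL (by linarith)
    hshare hdeg ((exp_le_exp_neg_mul_esBound ha hk).trans hlt.le)
  have hpow : 0 < colourShare k i ^ (a ^ 6) :=
    pow_pos ((by positivity : 0 < 1 / (2 * L)).trans_le (hshare i)) _
  refine (hle.trans (hbook.card_pages_le (by lia) hL hk hkL hW hT hM hTa)).not_gt ?_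
  calc colourShare k i ^ (a ^ 6) * Real.exp (-(a ^ 2 / (8 * L ^ 2))) * esBound k
      ≤ colourShare k i ^ (a ^ 6) * Real.exp (-(16 * (L * a)) + -(2 * a)) * esBound k := by
        gcongr
        linarith
    _ = colourShare k i ^ (a ^ 6) * Real.exp (-(16 * (L * a))) *
          (Real.exp (-(2 * a)) * esBound k) := by
        rw [Real.exp_add]
        ring
    _ < colourShare k i ^ (a ^ 6) * Real.exp (-(16 * (L * a))) * #W := by gcongr

theorem exists_colourShare_mul_le_card_colourNbhd (hL : 1 ≤ L) (haL : 200 * L ^ 3 ≤ a)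
    (hk : ∀ i, a ^ 10 ≤ k i) (hkL : ∀ i, k i ≤ L * a ^ 10)
    (hW : ∀ i, ¬ HasMonoClique c i (k i) W) (hlt : Real.exp (-(2 * a)) * esBound k < #W) :
    ∃ i, ∃ x ∈ W, colourShare k i * (1 + 1 / a ^ 5) * #W ≤ #(colourNbhd c i x W) := by
  have ha : (200 : ℝ) ≤ a := by linarith [one_le_pow₀ hL (n := 3)]
  have ha' : 200 ≤ a := Nat.ofNat_le_cast.1 ha
  obtain ⟨i, x, hx, hdeg⟩ : ∃ i, ∃ x ∈ W,
      (#(colourNbhd c i x W) : ℝ) < (colourShare k i - 2 / a ^ 5) * #W := by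
    by_contra! hdeg
    exact hlt.not_ge (card_le_exp_neg_mul_esBound hL haL hk hkL hdeg hW)
  refine ⟨1 - i, x, hx, ?_⟩
  have hsum := colourShare_add_colourShare_one_sub ((by positivity : 0 < a ^ 10).trans_le (hk i))
  have hsize : 1 ≤ 1 / (a : ℝ) ^ 5 * #W := by
    rw [one_div_mul_eq_div, one_le_div (by positivity)]
    have hpow : (a : ℝ) ^ 5 ≤ a ^ 9 := pow_le_pow_right₀ (by linarith) (by norm_num)
    have hexp := Real.add_one_le_exp (12 * (a : ℝ) ^ 9 + 4 * a ^ 7)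
    have : 0 < (a : ℝ) ^ 7 := by positivity
    linarith [exp_le_exp_neg_mul_esBound ha' hk, pow_pos (by linarith : (0 : ℝ) < a) 9]
  have hcard : (#W : ℝ) ≤ #(colourNbhd c i x W) + #(colourNbhd c (1 - i) x W) + 1 := by
    have h := card_le_card_colourNbhd_add c x W
    fin_cases i
    · exact_mod_cast h
    · exact_mod_cast (by simpa [add_comm] using h)
  have hshare : colourShare k (1 - i) * (1 / a ^ 5) ≤ 1 / (a : ℝ) ^ 5 := by
    refine mul_le_of_le_one_left (by positivity) ?_
    have : 0 ≤ colourShare k i := by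
      unfold colourShare
      positivity
    linarith
  calc colourShare k (1 - i) * (1 + 1 / a ^ 5) * (#W : ℝ)
      ≤ (1 - colourShare k i + 1 / a ^ 5) * (#W : ℝ) := by
        gcongr
        linarith
    _ ≤ (#(colourNbhd c (1 - i) x W) : ℝ) := by
        rw [div_eq_mul_one_div] at hdeg
        linarith

end

theorem card_mul_pow_le_esBound (hL : 1 ≤ L) (haL : 200 * L ^ 3 ≤ a) {j : ℕ} (hj : j ≤ a ^ 6)
    (hk : ∀ i, a ^ 10 + j ≤ k i) (hkL : ∀ i, k i ≤ L * a ^ 10)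
    (hW : ∀ i, ¬ HasMonoClique c i (k i) W) : #W * (1 + 1 / (a : ℝ) ^ 5) ^ j ≤ esBound k := by
  classical
  have ha : 0 < a := Nat.cast_pos.1 ((by positivity : 0 < 200 * L ^ 3).trans_le haL)
  induction j generalizing k W with
  | zero =>
    rw [pow_zero, mul_one, Nat.cast_le]
    by_contra! hlt
    obtain ⟨i, hi⟩ := exists_hasMonoClique_of_esBound_le (c := c) hlt.le
    exact hW i hi
  | succ j ih =>
    rcases le_or_gt (#W : ℝ) (Real.exp (-(2 * a)) * esBound k) with hle | hlt
    · calc #W * (1 + 1 / (a : ℝ) ^ 5) ^ (j + 1)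
          ≤ Real.exp (-(2 * a)) * esBound k * Real.exp a := by
            gcongr
            exact one_add_one_div_pow_le_exp ha hj
        _ = Real.exp (-a) * esBound k := by
            rw [mul_right_comm, ← Real.exp_add]
            ring_nf
        _ ≤ esBound k := mul_le_of_le_one_left (Nat.cast_nonneg _)
            (Real.exp_le_one_iff.2 (neg_nonpos.2 (Nat.cast_nonneg a)))
    · obtain ⟨i, x, hx, hdeg⟩ := exists_colourShare_mul_le_card_colourNbhd hL haL
        (fun i => le_trans (by lia) (hk i)) hkL hW hlt
      obtain ⟨k, rfl⟩ := exists_eq_add_single (le_trans (by lia) (hk i) : 1 ≤ k i)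
      have hstep : ∀ j, k j ≤ (k + Pi.single i 1 : Fin 2 → ℕ) j ∧
          (k + Pi.single i 1 : Fin 2 → ℕ) j ≤ k j + 1 := fun j => by
        rcases eq_or_ne j i with rfl | hji <;> simp [*]
      have hN : #(colourNbhd c i x W) * (1 + 1 / (a : ℝ) ^ 5) ^ j ≤ esBound k :=
        ih (by lia) (fun j => by linarith [hk j, (hstep j).2])
          (fun j => (Nat.cast_le.2 (hstep j).1).trans (hkL j))
          fun j h => hW j (h.add_single_of_colourNbhd hx)
      refine le_esBound_add_single (le_trans ?_ hN)
      calc colourShare (k + Pi.single i 1) i * (#W * (1 + 1 / (a : ℝ) ^ 5) ^ (j + 1))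
          = colourShare (k + Pi.single i 1) i * (1 + 1 / a ^ 5) * #W *
              (1 + 1 / (a : ℝ) ^ 5) ^ j := by ring
        _ ≤ #(colourNbhd c i x W) * (1 + 1 / (a : ℝ) ^ 5) ^ j := by gcongr

end Density

end RegularColourings

section RamseyNumbers

open Finset

theorem ramsey2_le {n k l : ℕ}
    (h : ∀ c : Sym2 (Fin n) → Fin 2, ∃ i, HasMonoClique c i (![k, l] i) univ) :
    ramsey2 k l ≤ n :=
  Nat.sInf_le fun c =>
    let ⟨i, A, _, hA, hc⟩ := h c
    ⟨i, A, hA, fun _ hu _ hv huv => hc hu hv huv⟩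

theorem ramsey2_le_choose (k l : ℕ) : ramsey2 (k + 1) (l + 1) ≤ (k + l).choose k :=
  ramsey2_le fun c => by
    rcases hasMonoClique_succ_or_of_choose_le (c := c) (card_fin _).ge with h | h
    · exact ⟨0, h⟩
    · exact ⟨1, h⟩

theorem ramsey2_zero_right (k : ℕ) : ramsey2 k 0 = 0 :=
  Nat.le_zero.1 (ramsey2_le fun c => ⟨1, hasMonoClique_zero c 1 univ⟩)

theorem ramsey2_le_half_mul_choose {k l : ℕ} (hk : 0 < k) (hl : 0 < l) :
    (ramsey2 k l : ℝ) ≤ 1 / 2 * (k + l).choose k := by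
  obtain ⟨k, rfl⟩ := Nat.exists_eq_add_of_le' hk
  obtain ⟨l, rfl⟩ := Nat.exists_eq_add_of_le' hl
  have h : (2 * ramsey2 (k + 1) (l + 1) : ℝ) ≤ (k + 1 + (l + 1)).choose (k + 1) := by
    exact_mod_cast (Nat.mul_le_mul_left 2 (ramsey2_le_choose k l)).trans (two_mul_choose_le k l)
  linarith

theorem two_pow_le_one_add_one_div_pow {a : ℕ} (ha : 0 < a) :
    2 ^ a ≤ (1 + 1 / (a : ℝ) ^ 5) ^ (a ^ 6) := by
  have hbernoulli : 2 ≤ (1 + 1 / (a : ℝ) ^ 5) ^ (a ^ 5) := by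
    have hneg : (-2 : ℝ) ≤ 1 / (a : ℝ) ^ 5 := by linarith [show 0 ≤ 1 / (a : ℝ) ^ 5 by positivity]
    refine le_trans (le_of_eq ?_) (one_add_mul_le_pow hneg _)
    push_cast
    field_simp
    norm_num
  calc (2 : ℝ) ^ a ≤ ((1 + 1 / (a : ℝ) ^ 5) ^ (a ^ 5)) ^ a := by gcongr
    _ = (1 + 1 / (a : ℝ) ^ 5) ^ (a ^ 6) := by rw [← pow_mul, ← pow_succ]

theorem ramsey2_le_two_div_pow_mul_choose {k l a : ℕ} {L : ℝ} (hL : 1 ≤ L)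
    (haL : 200 * L ^ 3 ≤ a) (hk : 2 * a ^ 10 ≤ k) (hl : 2 * a ^ 10 ≤ l) (hkL : k ≤ L * a ^ 10)
    (hlL : l ≤ L * a ^ 10) : (ramsey2 k l : ℝ) ≤ 2 / 2 ^ a * (k + l).choose k := by
  have ha : 0 < a := Nat.cast_pos.1 ((by positivity : 0 < 200 * L ^ 3).trans_le haL)
  have hpow : a ^ 6 ≤ a ^ 10 := Nat.pow_le_pow_right ha (by norm_num)
  have haa : a ≤ a ^ 10 := Nat.le_self_pow (by norm_num) a
  set B : ℝ := (k + l).choose k / 2 ^ a with hB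
  have hB₁ : 1 ≤ B := by
    rw [hB, one_le_div (by positivity)]
    exact_mod_cast two_pow_le_choose (by lia : a ≤ k) (by lia : a ≤ l)
  have hle : ramsey2 k l ≤ ⌊B⌋₊ + 1 := ramsey2_le fun c => by
    by_contra! hc
    have hcard := card_mul_pow_le_esBound hL haL le_rfl
      (Fin.forall_fin_two.2 ⟨(by lia : a ^ 10 + a ^ 6 ≤ k), (by lia : a ^ 10 + a ^ 6 ≤ l)⟩)
      (Fin.forall_fin_two.2 ⟨hkL, hlL⟩) hc
    rw [card_fin] at hcard
    refine (Nat.lt_floor_add_one B).not_ge ?_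
    rw [hB, le_div_iff₀ (by positivity)]
    refine le_trans ?_ hcard
    push_cast
    gcongr
    exact two_pow_le_one_add_one_div_pow ha
  calc (ramsey2 k l : ℝ) ≤ ⌊B⌋₊ + 1 := by exact_mod_cast hle
    _ ≤ B + B := add_le_add (Nat.floor_le (by positivity)) hB₁
    _ = 2 / 2 ^ a * (k + l).choose k := by
      rw [hB]
      ring

theorem exists_ramsey2_le_exp_neg_mul_choose {L : ℝ} (hL : 1 ≤ L) :
    ∃ C : ℝ, 0 < C ∧ ∀ a k l : ℕ, 0 < k → 0 < l → 2 * a ^ 10 ≤ k → 2 * a ^ 10 ≤ l →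
      k ≤ L * (a + 1) ^ 10 → l ≤ L * (a + 1) ^ 10 →
      (ramsey2 k l : ℝ) ≤ Real.exp (-(C * (a + 1))) * (k + l).choose k := by
  set M : ℝ := 2 ^ 10 * L with hM
  have hM₁ : 1 ≤ M := by linarith
  have hM₃ : 1 ≤ M ^ 3 := one_le_pow₀ hM₁
  have hlog : 0 < Real.log 2 := Real.log_pos one_lt_two
  refine ⟨Real.log 2 / (201 * M ^ 3), by positivity, fun a k l hk₀ hl₀ hk hl hkL hlL => ?_⟩
  rw [div_mul_eq_mul_div]
  rcases lt_or_ge (a : ℝ) (200 * M ^ 3) with hsmall | hlarge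
  · refine (ramsey2_le_half_mul_choose hk₀ hl₀).trans ?_
    gcongr
    rw [one_div, ← Real.log_le_iff_le_exp (by positivity), Real.log_inv, neg_le_neg_iff,
      div_le_iff₀ (by positivity)]
    gcongr
    linarith
  · have ha : (1 : ℝ) ≤ a := by linarith
    have hgrow : L * ((a : ℝ) + 1) ^ 10 ≤ M * a ^ 10 := calc
      L * ((a : ℝ) + 1) ^ 10 ≤ L * (2 * (a : ℝ)) ^ 10 := by
        gcongr
        linarith
      _ = M * a ^ 10 := by
        rw [hM]
        ring
    refine (ramsey2_le_two_div_pow_mul_choose hM₁ hlarge hk hl (hkL.trans hgrow)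
      (hlL.trans hgrow)).trans ?_
    gcongr
    rw [← Real.log_le_iff_le_exp (by positivity), Real.log_div two_ne_zero (by positivity),
      Real.log_pow, le_neg, neg_sub, div_le_iff₀ (by positivity)]
    calc Real.log 2 * ((a : ℝ) + 1) ≤ (a * Real.log 2 - Real.log 2) * 201 := by nlinarith
      _ ≤ (a * Real.log 2 - Real.log 2) * (201 * M ^ 3) := by
        gcongr
        · nlinarith
        · linarith

end RamseyNumbers

theorem exists_two_mul_pow_le_lt (m : ℕ) {d : ℕ} (hd : d ≠ 0) :
    ∃ a : ℕ, 2 * a ^ d ≤ m ∧ m < 2 * (a + 1) ^ d := by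
  have hex : ∃ a, m < 2 * (a + 1) ^ d :=
    ⟨m, by linarith [Nat.le_self_pow hd (m + 1)]⟩
  refine ⟨Nat.find hex, ?_, Nat.find_spec hex⟩
  rcases Nat.eq_zero_or_eq_succ_pred (Nat.find hex) with h | h
  · simp [h, hd]
  · rw [h]
    exact not_lt.1 (Nat.find_min hex (h ▸ Nat.lt_succ_self _))

theorem exists_two_mul_pow_le_and_le_mul_pow {r : ℝ} {k l d : ℕ} (hd : d ≠ 0) (hlk : l ≤ r * k)
    (hkl : k ≤ r * l) : ∃ a : ℕ, 2 * a ^ d ≤ k ∧ 2 * a ^ d ≤ l ∧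
      k ≤ 2 * max r 1 * ((a : ℝ) + 1) ^ d ∧ l ≤ 2 * max r 1 * ((a : ℝ) + 1) ^ d := by
  obtain ⟨a, ha, ha'⟩ := exists_two_mul_pow_le_lt (min k l) hd
  have hbound {x : ℕ} (hx : x ≤ max r 1 * (min k l : ℕ)) :
      x ≤ 2 * max r 1 * ((a : ℝ) + 1) ^ d := by
    have hmin : (min k l : ℕ) ≤ 2 * ((a : ℝ) + 1) ^ d := by exact_mod_cast ha'.le
    calc (x : ℝ) ≤ max r 1 * (2 * ((a : ℝ) + 1) ^ d) := hx.trans (by gcongr)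
      _ = 2 * max r 1 * ((a : ℝ) + 1) ^ d := by ring
  have hself (x : ℕ) : (x : ℝ) ≤ max r 1 * x :=
    le_mul_of_one_le_left (Nat.cast_nonneg x) (le_max_right r 1)
  have hratio {x y : ℕ} (h : x ≤ r * y) : (x : ℝ) ≤ max r 1 * y := h.trans <| by
    gcongr
    exact le_max_left r 1
  refine ⟨a, ha.trans (min_le_left k l), ha.trans (min_le_right k l), hbound ?_, hbound ?_⟩
  · rcases min_choice k l with h | h <;> rw [h]
    exacts [hself k, hratio hkl]
  · rcases min_choice k l with h | h <;> rw [h]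
    exacts [hratio hlk, hself l]

theorem rpow_inv_natCast_le_mul {L x y : ℝ} {d : ℕ} (hd : d ≠ 0) (hL : 1 ≤ L) (hx : 0 ≤ x)
    (hy : 0 ≤ y) (h : x ≤ L * y ^ d) : x ^ (d : ℝ)⁻¹ ≤ L * y := by
  rw [Real.rpow_inv_le_iff_of_pos hx (by positivity) (by positivity), Real.rpow_natCast, mul_pow]
  exact h.trans (by gcongr; exact le_self_pow₀ hL hd)

theorem diagonal_ramsey_upper_general (r : ℝ) :
    ∃ C : ℝ, 0 < C ∧ ∀ k l : ℕ, l ≤ r * k → k ≤ r * l →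
      (ramsey2 k l : ℝ) ≤ Real.exp (-(C * (k : ℝ) ^ (1 / 10 : ℝ))) * (k + l).choose k := by
  have hL : 1 ≤ 2 * max r 1 := by linarith [le_max_right r 1]
  obtain ⟨C, hC, hramsey⟩ := exists_ramsey2_le_exp_neg_mul_choose hL
  refine ⟨C / (2 * max r 1), by positivity, fun k l hlk hkl => ?_⟩
  rcases Nat.eq_zero_or_pos l with rfl | hl₀
  · rw [ramsey2_zero_right, Nat.cast_zero]
    positivity
  have hk₀ : 0 < k := Nat.pos_of_ne_zero fun hk => by simp [hk, hl₀.ne'] at hlk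
  obtain ⟨a, hak, hal, hk, hl⟩ :=
    exists_two_mul_pow_le_and_le_mul_pow (d := 10) (by norm_num) hlk hkl
  have hroot : (k : ℝ) ^ (1 / 10 : ℝ) ≤ 2 * max r 1 * (a + 1) := by
    simpa using rpow_inv_natCast_le_mul (by norm_num) hL (Nat.cast_nonneg k) (by positivity) hk
  refine (hramsey a k l hk₀ hl₀ hak hal hk hl).trans ?_
  gcongr ?_ * _
  rw [Real.exp_le_exp, neg_le_neg_iff, div_mul_eq_mul_div, div_le_iff₀ (by positivity), mul_assoc,
    mul_comm _ (2 * max r 1)]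
  gcongr

theorem log_sq_le_mul_rpow {x : ℝ} (hx : 1 ≤ x) : Real.log x ^ 2 ≤ 400 * x ^ (1 / 10 : ℝ) := by
  have hlog : Real.log x ≤ 20 * x ^ (1 / 20 : ℝ) := by
    linarith [Real.log_le_rpow_div (by linarith : 0 ≤ x) (by norm_num : (0 : ℝ) < 1 / 20)]
  calc Real.log x ^ 2 ≤ (20 * x ^ (1 / 20 : ℝ)) ^ 2 :=
        pow_le_pow_left₀ (Real.log_nonneg hx) hlog 2
    _ = 400 * x ^ (1 / 10 : ℝ) := by
      rw [mul_pow, ← Real.rpow_mul_natCast (by linarith)]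
      norm_num

theorem exists_exp_neg_mul_rpow_le {C : ℝ} (hC : 0 < C) : ∃ c : ℝ, 0 < c ∧ ∀ x : ℝ, 3 ≤ x →
    Real.exp (-(C * x ^ (1 / 10 : ℝ))) ≤ x ^ (-(c * Real.log x / Real.log (Real.log x))) := by
  have hlog₃ : 1 < Real.log 3 := (Real.lt_log_iff_exp_lt (by norm_num)).2 Real.exp_one_lt_three
  have hloglog₃ : 0 < Real.log (Real.log 3) := Real.log_pos hlog₃
  refine ⟨C * Real.log (Real.log 3) / 400, by positivity, fun x hx => ?_⟩
  have hlog : Real.log 3 ≤ Real.log x := Real.log_le_log (by norm_num) hx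
  have hloglog : Real.log (Real.log 3) ≤ Real.log (Real.log x) :=
    Real.log_le_log (by linarith) hlog
  rw [Real.rpow_def_of_pos (by linarith) (-(_ / _)), Real.exp_le_exp, mul_neg, neg_le_neg_iff,
    ← mul_div_assoc, div_le_iff₀ (by linarith)]
  calc Real.log x * (C * Real.log (Real.log 3) / 400 * Real.log x)
      = C * (Real.log x ^ 2 / 400) * Real.log (Real.log 3) := by ring
    _ ≤ C * x ^ (1 / 10 : ℝ) * Real.log (Real.log x) := by
      gcongr
      linarith [log_sq_le_mul_rpow (by linarith : 1 ≤ x)]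

/-- There is `C > 0` such that for `k ≥ 3` and `l/2 ≤ k ≤ 2l`,
`r(k,l) ≤ k^{-C log k / log log k} C(k+l, k)`. -/
theorem diagonal_ramsey_upper :
    ∃ C : ℝ, 0 < C ∧ ∀ k l : ℕ, 3 ≤ k → l ≤ 2 * k → k ≤ 2 * l →
      (ramsey2 k l : ℝ) ≤
        (k : ℝ) ^ (-(C * Real.log k / Real.log (Real.log k))) * ((k + l).choose k) := by
  obtain ⟨C, hC, hramsey⟩ := diagonal_ramsey_upper_general 2
  obtain ⟨c, hc, hcompare⟩ := exists_exp_neg_mul_rpow_le hC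
  exact ⟨c, hc, fun k l hk hlk hkl => (hramsey k l (mod_cast hlk) (mod_cast hkl)).trans
    (mul_le_mul_of_nonneg_right (hcompare k (mod_cast hk)) (Nat.cast_nonneg _))⟩
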